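/- arXiv:2511.01509 — 7 statements merged into one kernel-verified Lean document; each statement's English description precedes it below -/
import Mathlib

section
/- (Faudree–Schelp; Kopylov) Let k ≥ 3 and n ≥ 0 be integers, and write n = s(k−1) + r with s ≥ 0 and 0 ≤ r ≤ k−2. Then ex(n, P_k) = s·C(k−1, 2) + C(r, 2). -/
open SimpleGraph

/-- The number of edges of a simple graph. -/
noncomputable def edgeCount {V : Type*} (G : SimpleGraph V) : ℕ := G.edgeSet.ncard

/-- `H` occurs as a subgraph of `G` (there is an injective map preserving adjacency). -/
def ContainsCopy {V W : Type*} (G : SimpleGraph V) (H : SimpleGraph W) : Prop :=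
  ∃ f : W → V, Function.Injective f ∧ ∀ a b : W, H.Adj a b → G.Adj (f a) (f b)

/-- The Turán number `ex(n, H)`: the maximum number of edges of an `H`-free
simple graph on `n` vertices. -/
noncomputable def exNum (n : ℕ) {W : Type*} (H : SimpleGraph W) : ℕ :=
  sSup {m | ∃ G : SimpleGraph (Fin n), ¬ ContainsCopy G H ∧ edgeCount G = m}

/-- `h(n,k,a) = C(k-a,2) + a(n-k+a)`. -/
def hFun (n k a : ℕ) : ℕ := (k - a).choose 2 + a * (n - k + a)

/-- `c(n,m,ℓ) = C(m-1,2) + t·C(ℓ-1,2) + C(r,2)` where `n = (m-1) + t(ℓ-1) + r`,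
`0 ≤ r < ℓ-1`. -/
def cFun (n m l : ℕ) : ℕ :=
  (m - 1).choose 2 + ((n - (m - 1)) / (l - 1)) * ((l - 1).choose 2)
    + ((n - (m - 1)) % (l - 1)).choose 2

open SimpleGraph Finset

namespace PathTuran

section Lists

variable {α : Type*}

theorem exists_split_first {p : α → Prop} {l : List α} (h : ∃ x ∈ l, p x) :
    ∃ l₁ a l₂, l = l₁ ++ a :: l₂ ∧ p a ∧ ∀ x ∈ l₁, ¬ p x := by
  induction l with
  | nil => simp at h
  | cons b l ih =>
    by_cases hb : p b
    · exact ⟨[], b, l, rfl, hb, by simp⟩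
    · have : ∃ x ∈ l, p x := by
        obtain ⟨x, hx, hpx⟩ := h
        rcases List.mem_cons.1 hx with rfl | hx
        · exact absurd hpx hb
        · exact ⟨x, hx, hpx⟩
      obtain ⟨l₁, a, l₂, rfl, ha, hl⟩ := ih this
      refine ⟨b :: l₁, a, l₂, rfl, ha, ?_⟩
      simpa [hb] using hl

theorem exists_split_last {p : α → Prop} {l : List α} (h : ∃ x ∈ l, p x) :
    ∃ l₁ a l₂, l = l₁ ++ a :: l₂ ∧ p a ∧ ∀ x ∈ l₂, ¬ p x := by
  obtain ⟨l₁, a, l₂, hl, ha, hl₁⟩ := exists_split_first (l := l.reverse) (p := p) (by simpa using h)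
  refine ⟨l₂.reverse, a, l₁.reverse, ?_, ha, by simpa using hl₁⟩
  rw [← List.reverse_reverse l, hl]
  simp

theorem exists_split_of_not_isChain {R : α → α → Prop} {l : List α} (h : ¬ l.IsChain R) :
    ∃ l₁ a b l₂, l = l₁ ++ a :: b :: l₂ ∧ ¬ R a b := by
  induction l with
  | nil => simp at h
  | cons c l ih =>
    cases l with
    | nil => simp at h
    | cons d l =>
      by_cases hcd : R c d
      · obtain ⟨l₁, a, b, l₂, hl, hab⟩ := ih (by simpa [hcd] using h)
        exact ⟨c :: l₁, a, b, l₂, by simp [hl], hab⟩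
      · exact ⟨[], c, d, l, rfl, hcd⟩

open Classical in
theorem countP_add_countP_tail_le {p q : α → Prop} (z : α) (l : List α)
    (h : (z :: l).IsChain fun a b => ¬ (p a ∧ q b)) :
    (z :: l).countP (fun x => decide (p x)) + l.countP (fun x => decide (q x)) ≤ l.length + 1 := by
  induction l generalizing z with
  | nil => simp; split_ifs <;> simp
  | cons y l ih =>
    rw [List.isChain_cons_cons] at h
    have := ih y h.2
    rw [List.countP_cons (a := z),
      List.countP_cons (a := y) (l := l) (p := fun x => decide (q x)), List.length_cons]
    simp only [decide_eq_true_eq]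
    split_ifs with hp hq hq
    · exact absurd ⟨hp, hq⟩ h.1
    all_goals omega

open Classical in
theorem countP_add_countP_tail_le_of_last {p q : α → Prop} (z : α) (l : List α)
    (h : (z :: l).IsChain fun a b => ¬ (p a ∧ q b)) (hl : ∀ x ∈ (z :: l).getLast?, ¬ p x) :
    (z :: l).countP (fun x => decide (p x)) + l.countP (fun x => decide (q x)) ≤ l.length := by
  induction l generalizing z with
  | nil => simp_all
  | cons y l ih =>
    rw [List.isChain_cons_cons] at h
    have := ih y h.2 (by simpa using hl)
    rw [List.countP_cons (a := z),
      List.countP_cons (a := y) (l := l) (p := fun x => decide (q x)), List.length_cons]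
    simp only [decide_eq_true_eq]
    split_ifs with hp hq hq
    · exact absurd ⟨hp, hq⟩ h.1
    all_goals omega

end Lists

variable {V : Type*} {G : SimpleGraph V} {m : ℕ}

/-- Every path of `G` has at most `m` vertices. -/
def PathBound (G : SimpleGraph V) (m : ℕ) : Prop :=
  ∀ l : List V, l.IsChain G.Adj → l.Nodup → l.length ≤ m

/-- Two disjoint paths starting at `u` and `v`, with more than `m` vertices altogether. -/
structure LongPair (G : SimpleGraph V) (m : ℕ) (u v : V) (l₁ l₂ : List V) : Prop where
  chain_left : (u :: l₁).IsChain G.Adj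
  chain_right : (v :: l₂).IsChain G.Adj
  nodup : (u :: l₁ ++ v :: l₂).Nodup
  lt_length : m < (u :: l₁ ++ v :: l₂).length

theorem LongPair.symm {u v : V} {l₁ l₂ : List V} (h : LongPair G m u v l₁ l₂) :
    LongPair G m v u l₂ l₁ := by
  refine ⟨h.chain_right, h.chain_left, ?_, ?_⟩
  · exact (List.perm_append_comm.nodup_iff).1 h.nodup
  · have := h.lt_length
    simp only [List.length_append] at this ⊢
    omega

theorem isChain_reverse_adj {l : List V} (h : l.IsChain G.Adj) : l.reverse.IsChain G.Adj := by
  rw [List.isChain_reverse]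
  exact h.imp fun _ _ h => h.symm

/-- Rerouting the first path of a pair through an edge `f v` and an edge from `u` to the
head of `X`, at the cost of the segment `Y`. -/
theorem LongPair.reroute (hG : PathBound G m) {u v : V} {l₁ l₂ : List V}
    (h : LongPair G m u v l₁ l₂) {F Y X : List V} {f : V}
    (hl : u :: l₁ = F ++ [f] ++ Y ++ X) (hf : G.Adj v f) (hX : ∀ x ∈ X.head?, G.Adj u x) :
    X.length + (F.length + 1) + (l₂.length + 1) ≤ m := by
  have hc := h.chain_left
  have hn := h.nodup
  have hu : (F ++ [f]).head? = some u := by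
    have : (F ++ [f] ++ Y ++ X).head? = some u := by rw [← hl]; rfl
    cases F <;> simpa using this
  rw [hl] at hc hn
  have hchain : (X.reverse ++ ((F ++ [f]) ++ v :: l₂)).IsChain G.Adj := by
    simp only [List.isChain_append] at hc
    rw [List.isChain_append, List.isChain_append]
    refine ⟨isChain_reverse_adj hc.2.1, ⟨?_, h.chain_right, ?_⟩, ?_⟩
    · rw [List.isChain_append]; exact hc.1.1
    · simpa using hf.symm
    · intro x hx y hy
      rw [List.getLast?_reverse] at hx
      have : y = u := by
        rw [List.head?_append, hu] at hy
        simpa using hy.symm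
      subst this
      exact (hX x hx).symm
  have hnodup : (X.reverse ++ ((F ++ [f]) ++ v :: l₂)).Nodup := by
    have hperm : (X.reverse ++ ((F ++ [f]) ++ v :: l₂)).Perm ((F ++ [f]) ++ X ++ v :: l₂) := by
      rw [← List.append_assoc]
      exact (((List.reverse_perm X).append_right _).trans List.perm_append_comm).append_right _
    refine hperm.nodup_iff.2 (hn.sublist ?_)
    exact (((List.sublist_append_left _ Y).append_right X)).append_right _
  have := hG _ hchain hnodup
  simp at this
  omega

open Classical in
theorem LongPair.not_adj (hG : PathBound G m) {u v : V} {l₁ l₂ : List V}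
    (h : LongPair G m u v l₁ l₂)
    (hcount : m ≤ (u :: l₁ ++ v :: l₂).countP (fun x => decide (G.Adj u x)) +
      (u :: l₁ ++ v :: l₂).countP (fun x => decide (G.Adj v x))) :
    ∀ x ∈ u :: l₁, ¬ G.Adj v x := by
  by_contra! hcon
  obtain ⟨F, f, W, hFW, hf, hW⟩ := exists_split_last hcon
  obtain ⟨Y, X, hYX, hY, hX⟩ : ∃ Y X, W = Y ++ X ∧ (∀ y ∈ Y, ¬ G.Adj u y) ∧
      ∀ x ∈ X.head?, G.Adj u x := by
    by_cases hu : ∃ x ∈ W, G.Adj u x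
    · obtain ⟨Y, a, X, hW', ha, hY⟩ := exists_split_first hu
      exact ⟨Y, a :: X, hW', hY, by simpa using ha⟩
    · push Not at hu
      exact ⟨W, [], by simp, hu, by simp⟩
  have hlen := h.lt_length
  have hmain := h.reroute hG (F := F) (f := f) (Y := Y) (X := X) (by simp [hFW, hYX]) hf hX
  have hR : (F ++ [f]).IsChain fun a b => ¬ (G.Adj v a ∧ G.Adj u b) := by
    by_contra hR
    obtain ⟨E₁, b, a, E₂, hE, hab⟩ := exists_split_of_not_isChain hR
    push Not at hab
    have hl : u :: l₁ = E₁ ++ [b] ++ [] ++ (a :: E₂ ++ W) := by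
      have : u :: l₁ = (F ++ [f]) ++ W := by simp [hFW]
      rw [this, hE]; simp
    have := h.reroute hG hl hab.1 (by simpa using hab.2)
    have hl' := congrArg List.length hl
    simp at hl' this hlen
    omega
  have hT : (v :: l₂).IsChain fun a b => ¬ (G.Adj u a ∧ G.Adj v b) := by
    by_contra hR
    obtain ⟨E₁, b, a, E₂, hE, hab⟩ := exists_split_of_not_isChain hR
    push Not at hab
    have hl : v :: l₂ = E₁ ++ [b] ++ [] ++ (a :: E₂) := by
      rw [hE]; simp
    have := h.symm.reroute hG hl hab.1 (by simpa using hab.2)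
    have hl' := congrArg List.length hl
    simp at hl' this hlen
    omega
  have hlast : ∀ x ∈ (v :: l₂).getLast?, ¬ G.Adj u x := by
    intro x hx hux
    obtain ⟨E, hE⟩ := List.getLast?_eq_some_iff.1 hx
    have hl : v :: l₂ = E ++ [x] ++ [] ++ [] := by simp [hE]
    have := h.symm.reroute hG hl hux (by simp)
    have hl' := congrArg List.length hl
    simp at hl' this hlen
    omega
  have h1 := countP_add_countP_tail_le_of_last v l₂ hT hlast
  obtain ⟨F', hF'⟩ : ∃ F', F ++ [f] = u :: F' := by
    cases F with
    | nil => simp at hFW; exact ⟨[], by simp [hFW.1]⟩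
    | cons a F => simp at hFW; exact ⟨F ++ [f], by simp [hFW.1]⟩
  have hFl := congrArg List.length hF'
  have h2 := countP_add_countP_tail_le u F' (hF' ▸ hR)
  have hL : u :: l₁ = (u :: F') ++ Y ++ X := by
    rw [← hF', hFW, hYX]; simp
  have hYu : Y.countP (fun x => decide (G.Adj u x)) = 0 := by
    simpa [List.countP_eq_zero] using hY
  have hYv : Y.countP (fun x => decide (G.Adj v x)) = 0 := by
    simp only [List.countP_eq_zero, decide_eq_true_eq]
    exact fun x hx => hW x (by simp [hYX, hx])
  have hXv : X.countP (fun x => decide (G.Adj v x)) = 0 := by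
    simp only [List.countP_eq_zero, decide_eq_true_eq]
    exact fun x hx => hW x (by simp [hYX, hx])
  have hXu : X.countP (fun x => decide (G.Adj u x)) ≤ X.length := List.countP_le_length
  rw [hL] at hcount
  simp only [List.countP_append, hYu, hYv, hXv] at hcount
  rw [List.countP_cons_of_neg (a := u) (p := fun x => decide (G.Adj u x)) (by simp),
    List.countP_cons_of_neg (a := v) (p := fun x => decide (G.Adj v x)) (by simp)] at hcount
  simp at hFl
  omega

/-- A cyclically closed path can be cut open so as to end at any prescribed vertex. -/
theorem exists_perm_getLast {u c : V} {l : List V} (hl : (u :: l).IsChain G.Adj)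
    (hlast : ∀ x ∈ l.getLast?, G.Adj u x) (hc : c ∈ u :: l) :
    ∃ l' : List V, l'.Perm (u :: l) ∧ l'.IsChain G.Adj ∧ l'.getLast? = some c := by
  obtain ⟨E, D, hED⟩ := List.append_of_mem hc
  have hED' : u :: l = (E ++ [c]) ++ D := by simp [hED]
  refine ⟨D ++ (E ++ [c]), ?_, ?_, by simp⟩
  · rw [hED']
    exact List.perm_append_comm
  · have hu : (E ++ [c]).head? = some u := by
      have : ((E ++ [c]) ++ D).head? = some u := by rw [← hED']; rfl
      cases E <;> simpa using this
    rw [hED', List.isChain_append] at hl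
    rw [List.isChain_append]
    refine ⟨hl.2.1, hl.1, fun x hx y hy => ?_⟩
    rw [hu] at hy
    obtain rfl : u = y := by simpa using hy
    refine (hlast x ?_).symm
    cases E with
    | nil =>
      obtain ⟨-, rfl⟩ : u = c ∧ l = D := by simpa using hED
      exact hx
    | cons e E =>
      obtain ⟨-, rfl⟩ : u = e ∧ l = E ++ c :: D := by simpa using hED
      have hD : D ≠ [] := by rintro rfl; simp at hx
      rw [show E ++ c :: D = (E ++ [c]) ++ D by simp, List.getLast?_append_of_ne_nil _ hD]
      exact hx

/-- In a connected graph two disjoint sets are joined by a path that is internally disjoint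
from both. -/
theorem exists_link (hconn : G.Preconnected) {p q : V → Prop} (hpq : ∀ x, p x → ¬ q x)
    {a b : V} (ha : p a) (hb : q b) :
    ∃ s M t, p s ∧ q t ∧ (s :: (M ++ [t])).IsChain G.Adj ∧ M.Nodup ∧
      ∀ x ∈ M, ¬ p x ∧ ¬ q x := by
  classical
  obtain ⟨w, hw⟩ := (hconn a b).exists_isPath
  have hchain := w.isChain_adj_support
  have hnodup := hw.support_nodup
  obtain ⟨l₁, s, l₂, hl, hs, hl₂⟩ := exists_split_last (p := p) ⟨a, w.start_mem_support, ha⟩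
  have hb₂ : b ∈ l₂ := by
    have hlast : w.support.getLast? = some b := by
      rw [List.getLast?_eq_some_getLast (by simp), w.getLast_support]
    rw [hl, show l₁ ++ s :: l₂ = (l₁ ++ [s]) ++ l₂ by simp] at hlast
    by_cases h2 : l₂ = []
    · subst h2
      simp at hlast
      exact absurd hb (hpq _ (hlast ▸ hs))
    · rw [List.getLast?_append_of_ne_nil _ h2] at hlast
      exact List.mem_of_getLast? hlast
  obtain ⟨M, t, l₃, hl', ht, hM⟩ := exists_split_first (p := q) ⟨b, hb₂, hb⟩
  rw [hl, hl'] at hchain hnodup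
  refine ⟨s, M, t, hs, ht, ?_, ?_, fun x hx => ⟨hl₂ x (by simp [hl', hx]), hM x hx⟩⟩
  · rw [show l₁ ++ s :: (M ++ t :: l₃) = l₁ ++ (s :: (M ++ [t]) ++ l₃) by simp] at hchain
    exact hchain.right_of_append.left_of_append
  · exact hnodup.sublist (List.IsInfix.sublist ⟨l₁ ++ [s], t :: l₃, by simp⟩)

theorem length_add_length_le (hconn : G.Preconnected) (hG : PathBound G m) {u v : V}
    {l₁ l₂ : List V} (h₁ : (u :: l₁).IsChain G.Adj) (h₂ : (v :: l₂).IsChain G.Adj)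
    (hn : (u :: l₁ ++ v :: l₂).Nodup) (hu : ∀ x ∈ l₁.getLast?, G.Adj u x)
    (hv : ∀ x ∈ l₂.getLast?, G.Adj v x) : (l₁.length + 1) + (l₂.length + 1) ≤ m := by
  rw [List.nodup_append'] at hn
  obtain ⟨s, M, t, hs, ht, hc, hM, hMd⟩ := exists_link hconn (p := (· ∈ u :: l₁))
    (q := (· ∈ v :: l₂)) (fun x hx hx' => hn.2.2 hx hx') (a := u) (b := v) (by simp) (by simp)
  obtain ⟨c₁, hp₁, hc₁, hs₁⟩ := exists_perm_getLast h₁ hu hs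
  obtain ⟨c₂, hp₂, hc₂, ht₂⟩ := exists_perm_getLast h₂ hv ht
  have hchain : (c₁ ++ (M ++ c₂.reverse)).IsChain G.Adj := by
    rw [← List.cons_append, List.isChain_append, List.isChain_cons] at hc
    rw [List.isChain_append, List.isChain_append]
    refine ⟨hc₁, ⟨hc.1.2, isChain_reverse_adj hc₂, ?_⟩, ?_⟩
    · intro x hx y hy
      rw [List.head?_reverse, ht₂] at hy
      refine hc.2.2 x ?_ y (by simpa using hy)
      rw [List.getLast?_cons, Option.mem_def.1 hx]
      simp
    · intro x hx y hy
      rw [hs₁] at hx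
      obtain rfl : s = x := by simpa using hx
      cases M with
      | nil =>
        simp only [List.nil_append, List.head?_reverse, ht₂] at hy
        refine hc.2.2 s (by simp) y (by simpa using hy)
      | cons z M =>
        exact hc.1.1 y (by simpa using hy)
  have hnodup : (c₁ ++ (M ++ c₂.reverse)).Nodup := by
    rw [List.nodup_append', List.nodup_append']
    refine ⟨hp₁.nodup_iff.2 hn.1, ⟨hM, List.nodup_reverse.2 (hp₂.nodup_iff.2 hn.2.1), ?_⟩, ?_⟩
    · intro x hx hx'
      exact (hMd x hx).2 (hp₂.mem_iff.1 (List.mem_reverse.1 hx'))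
    · intro x hx hx'
      rcases List.mem_append.1 hx' with hx' | hx'
      · exact (hMd x hx').1 (hp₁.mem_iff.1 hx)
      · exact hn.2.2 (hp₁.mem_iff.1 hx) (hp₂.mem_iff.1 (List.mem_reverse.1 hx'))
  have := hG _ hchain hnodup
  have e₁ := hp₁.length_eq
  have e₂ := hp₂.length_eq
  simp only [List.length_append, List.length_reverse, List.length_cons] at this e₁ e₂
  omega

theorem exists_prefix_last_adj (u : V) (l : List V) :
    ∃ l' r, l = l' ++ r ∧ (∀ x ∈ l'.getLast?, G.Adj u x) ∧ ∀ x ∈ r, ¬ G.Adj u x := by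
  by_cases h : ∃ x ∈ l, G.Adj u x
  · obtain ⟨l₁, a, r, hl, ha, hr⟩ := exists_split_last h
    exact ⟨l₁ ++ [a], r, by simp [hl], by simpa using ha, hr⟩
  · push Not at h
    exact ⟨[], l, rfl, by simp, h⟩

open Classical in
theorem LongPair.countP_lt (hconn : G.Preconnected) (hG : PathBound G m) {u v : V}
    {l₁ l₂ : List V} (h : LongPair G m u v l₁ l₂) :
    (u :: l₁ ++ v :: l₂).countP (fun x => decide (G.Adj u x)) +
      (u :: l₁ ++ v :: l₂).countP (fun x => decide (G.Adj v x)) < m := by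
  by_contra! hcount
  have hv := h.not_adj hG hcount
  have hu := h.symm.not_adj hG (by
    simp only [List.countP_append] at hcount ⊢
    omega)
  obtain ⟨k₁, r₁, hl₁, hk₁, hr₁⟩ := exists_prefix_last_adj (G := G) u l₁
  obtain ⟨k₂, r₂, hl₂, hk₂, hr₂⟩ := exists_prefix_last_adj (G := G) v l₂
  have c₁ : (u :: l₁).countP (fun x => decide (G.Adj v x)) = 0 := by
    simpa only [List.countP_eq_zero, decide_eq_true_eq] using hv
  have c₂ : (v :: l₂).countP (fun x => decide (G.Adj u x)) = 0 := by
    simpa only [List.countP_eq_zero, decide_eq_true_eq] using hu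
  have d₁ : r₁.countP (fun x => decide (G.Adj u x)) = 0 := by
    simpa only [List.countP_eq_zero, decide_eq_true_eq] using hr₁
  have d₂ : r₂.countP (fun x => decide (G.Adj v x)) = 0 := by
    simpa only [List.countP_eq_zero, decide_eq_true_eq] using hr₂
  have e₁ : k₁.countP (fun x => decide (G.Adj u x)) ≤ k₁.length := List.countP_le_length
  have e₂ : k₂.countP (fun x => decide (G.Adj v x)) ≤ k₂.length := List.countP_le_length
  have hlen := length_add_length_le hconn hG (l₁ := k₁) (l₂ := k₂)
    (List.IsChain.left_of_append (l₂ := r₁) (by simpa [hl₁] using h.chain_left))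
    (List.IsChain.left_of_append (l₂ := r₂) (by simpa [hl₂] using h.chain_right))
    (h.nodup.sublist (by
      rw [hl₁, hl₂]
      exact List.Sublist.append (by simp) (by simp))) hk₁ hk₂
  rw [List.countP_append, List.countP_append, c₁, c₂,
    List.countP_cons_of_neg (by simp), List.countP_cons_of_neg (by simp), hl₁, hl₂,
    List.countP_append, List.countP_append, d₁, d₂] at hcount
  omega

/-- Non-adjacent vertices always start two disjoint paths with more than `m` vertices. -/
def Saturated (G : SimpleGraph V) (m : ℕ) : Prop :=
  ∀ u v, u ≠ v → ¬ G.Adj u v → ∃ l₁ l₂, LongPair G m u v l₁ l₂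

open Classical in
theorem card_filter_le_countP {A : Finset V} {u : V} {l : List V}
    (h : ∀ w ∈ A, G.Adj u w → w ∈ l) :
    #{w ∈ A | G.Adj u w} ≤ l.countP (fun x => decide (G.Adj u x)) := by
  rw [List.countP_eq_length_filter]
  refine le_trans (Finset.card_le_card ?_) (List.toFinset_card_le _)
  intro w hw
  rw [Finset.mem_filter] at hw
  simpa [hw.2] using h w hw.1 hw.2

open Classical in
theorem LongPair.false_of_minDegree [Fintype V] (hconn : G.Preconnected) (hG : PathBound G m)
    {A B : Finset V} {a b : ℕ} (hA : ∀ x ∈ A, a ≤ #{y ∈ A | G.Adj x y})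
    (hB : ∀ x ∈ B, b ≤ #{y ∈ B | G.Adj x y}) (hab : m ≤ a + b) (d : ℕ) :
    ∀ u ∈ A, ∀ v ∈ B, ¬ G.Adj u v → ∀ l₁ l₂, LongPair G m u v l₁ l₂ →
      Fintype.card V - (l₁.length + l₂.length) ≤ d → False := by
  induction d with
  | zero =>
    intro u hu v hv huv l₁ l₂ h hd
    have := h.nodup.length_le_card
    simp at this
    omega
  | succ d ih =>
    intro u hu v hv huv l₁ l₂ h hd
    have hlt := h.lt_length
    have hnd := h.nodup
    have hcard := h.nodup.length_le_card
    simp only [List.length_append, List.length_cons] at hlt hcard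
    have huL : ∀ w ∈ A, G.Adj u w → w ∈ u :: l₁ ++ v :: l₂ := by
      intro w hw huw
      by_contra hwL
      have hc : (w :: u :: l₁).IsChain G.Adj := by
        rw [List.isChain_cons_cons]
        exact ⟨huw.symm, h.chain_left⟩
      have hn : (w :: u :: l₁ ++ v :: l₂).Nodup := by
        rw [List.cons_append, List.nodup_cons]
        exact ⟨hwL, hnd⟩
      by_cases hwv : G.Adj w v
      · have := hG ((w :: u :: l₁).reverse ++ v :: l₂) (by
          rw [List.isChain_append]
          refine ⟨isChain_reverse_adj hc, h.chain_right, ?_⟩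
          simpa using hwv) ((((List.reverse_perm _).append_right _).nodup_iff).2 hn)
        simp at this
        omega
      · refine ih w hw v hv hwv (u :: l₁) l₂ ⟨hc, h.chain_right, hn, ?_⟩ ?_
        · simp; omega
        · simp only [List.length_cons]; omega
    have hvL : ∀ w ∈ B, G.Adj v w → w ∈ u :: l₁ ++ v :: l₂ := by
      intro w hw hvw
      by_contra hwL
      have hc : (w :: v :: l₂).IsChain G.Adj := by
        rw [List.isChain_cons_cons]
        exact ⟨hvw.symm, h.chain_right⟩
      have hn : (u :: l₁ ++ w :: v :: l₂).Nodup := by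
        rw [List.nodup_middle, List.nodup_cons]
        exact ⟨hwL, hnd⟩
      by_cases huw : G.Adj u w
      · have := hG ((u :: l₁).reverse ++ w :: v :: l₂) (by
          rw [List.isChain_append]
          refine ⟨isChain_reverse_adj h.chain_left, hc, ?_⟩
          simpa using huw) ((((List.reverse_perm _).append_right _).nodup_iff).2 hn)
        simp at this
        omega
      · refine ih u hu w hw huw l₁ (v :: l₂) ⟨h.chain_left, hc, hn, ?_⟩ ?_
        · simp; omega
        · simp only [List.length_cons]; omega
    have h₁ := (hA u hu).trans (card_filter_le_countP huL)
    have h₂ := (hB v hv).trans (card_filter_le_countP hvL)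
    have h₃ := h.countP_lt hconn hG
    omega

open Classical in
theorem adj_of_minDegree [Fintype V] (hconn : G.Preconnected) (hG : PathBound G m)
    (hsat : Saturated G m) {A B : Finset V} {a b : ℕ} (hA : ∀ x ∈ A, a ≤ #{y ∈ A | G.Adj x y})
    (hB : ∀ x ∈ B, b ≤ #{y ∈ B | G.Adj x y}) (hab : m ≤ a + b) {u v : V} (hu : u ∈ A)
    (hv : v ∈ B) (huv : u ≠ v) : G.Adj u v := by
  by_contra hadj
  obtain ⟨l₁, l₂, h⟩ := hsat u v huv hadj
  exact h.false_of_minDegree hconn hG hA hB hab _ u hu v hv hadj l₁ l₂ le_rfl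

theorem isChain_of_isChain_sup_edge {u v : V} {l : List V}
    (hl : l.IsChain (G ⊔ edge u v).Adj) (h : u ∉ l ∨ v ∉ l) : l.IsChain G.Adj := by
  refine List.IsChain.imp_of_mem_imp (fun a b ha hb hab => ?_) hl
  rw [sup_adj, edge_adj] at hab
  rcases hab with hab | ⟨⟨rfl, rfl⟩ | ⟨rfl, rfl⟩, -⟩
  · exact hab
  all_goals simp_all

theorem saturated_of_maximal (hG : Maximal (fun H : SimpleGraph V => PathBound H m) G) :
    Saturated G m := by
  intro u v huv hadj
  have hlt : ¬ PathBound (G ⊔ edge u v) m := by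
    intro hb
    have := hG.2 hb le_sup_left
    exact hadj (this (by simp [sup_adj, edge_adj, huv]))
  simp only [PathBound, not_forall, not_le] at hlt
  obtain ⟨l, hl, hn, hlen⟩ := hlt
  have hnc : ¬ l.IsChain G.Adj := fun hc => by
    have := hG.1 l hc hn
    omega
  obtain ⟨l₁, a, b, l₂, rfl, hab⟩ := exists_split_of_not_isChain hnc
  rw [show l₁ ++ a :: b :: l₂ = (l₁ ++ [a]) ++ (b :: l₂) by simp] at hl hn hlen
  have habl : (G ⊔ edge u v).Adj a b := by
    rw [List.isChain_append] at hl
    exact hl.2.2 a (by simp) b (by simp)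
  have hd := (List.nodup_append'.1 hn).2.2
  have ha : a ∉ b :: l₂ := fun h => hd (by simp) h
  have hb : b ∉ l₁ ++ [a] := fun h => hd h (by simp)
  rw [List.isChain_append] at hl
  rw [sup_adj, edge_adj] at habl
  have key : LongPair G m a b l₁.reverse l₂ := by
    have hperm : (a :: l₁.reverse).Perm (l₁ ++ [a]) := by
      have := List.reverse_perm (l₁ ++ [a])
      simpa using this
    have hends : (u ∉ l₁ ++ [a] ∨ v ∉ l₁ ++ [a]) ∧ (u ∉ b :: l₂ ∨ v ∉ b :: l₂) := by
      rcases habl with habl | ⟨⟨rfl, rfl⟩ | ⟨rfl, rfl⟩, -⟩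
      · exact absurd habl hab
      · exact ⟨Or.inr hb, Or.inl ha⟩
      · exact ⟨Or.inl hb, Or.inr ha⟩
    refine ⟨?_, isChain_of_isChain_sup_edge hl.2.1 hends.2,
      ((hperm.append_right _).nodup_iff).2 hn, ?_⟩
    · have := isChain_reverse_adj (isChain_of_isChain_sup_edge hl.1 hends.1)
      simpa using this
    · rw [(hperm.append_right _).length_eq]
      exact hlen
  rcases habl with habl | ⟨⟨rfl, rfl⟩ | ⟨rfl, rfl⟩, -⟩
  · exact absurd habl hab
  · exact ⟨_, _, key⟩
  · exact ⟨_, _, key.symm⟩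

open Classical in
/-- In a saturated connected graph some threshold `a` below `m / 2` admits no subgraph of
minimum degree more than `a` on more than `m - a` vertices. -/
theorem exists_threshold [Fintype V] (hm : 1 ≤ m) (hconn : G.Preconnected) (hG : PathBound G m)
    (hsat : Saturated G m) : ∃ a, 2 * a + 1 ≤ m ∧
      ∀ S : Finset V, m - a < #S → ∃ x ∈ S, #{y ∈ S | G.Adj x y} ≤ a := by
  obtain ⟨t, ht1, ht2⟩ : ∃ t, 2 * t + 1 ≤ m ∧ m ≤ 2 * t + 2 := ⟨(m - 1) / 2, by omega, by omega⟩
  by_cases hcore : ∀ S : Finset V, m - t < #S → ∃ x ∈ S, #{y ∈ S | G.Adj x y} ≤ t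
  · exact ⟨t, ht1, hcore⟩
  push Not at hcore
  obtain ⟨S₀, hS₀, hdeg₀⟩ := hcore
  obtain ⟨H, hH, hmax⟩ := Finset.exists_max_image
    (Finset.univ.filter fun S : Finset V => ∀ x ∈ S, t < #{y ∈ S | G.Adj x y}) Finset.card
    ⟨S₀, by simpa using hdeg₀⟩
  simp only [Finset.mem_filter, Finset.mem_univ, true_and] at hH hmax
  have hqS := hmax S₀ hdeg₀
  have hclique : ∀ u ∈ H, ∀ v ∈ H, u ≠ v → G.Adj u v := fun u hu v hv huv =>
    adj_of_minDegree hconn hG hsat (a := t + 1) (b := t + 1) hH hH (by omega) hu hv huv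
  have hq : #H ≤ m := by
    have := hG H.toList ?_ H.nodup_toList
    · simpa using this
    · refine List.Pairwise.isChain ?_
      refine List.Pairwise.imp_of_mem (fun {a b} ha hb hab => ?_) H.nodup_toList
      exact hclique a (by simpa using ha) b (by simpa using hb) hab
  have hHdeg : ∀ x ∈ H, #H - 1 ≤ #{y ∈ H | G.Adj x y} := by
    intro x hx
    rw [← Finset.card_erase_of_mem hx]
    refine Finset.card_le_card fun y hy => ?_
    rw [Finset.mem_erase] at hy
    rw [Finset.mem_filter]
    exact ⟨hy.2, hclique x hx y hy.2 hy.1.symm⟩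
  refine ⟨m - #H, by omega, ?_⟩
  by_contra! hS
  obtain ⟨S, hS, hdeg⟩ := hS
  obtain ⟨u, huS, huH⟩ : ∃ u ∈ S, u ∉ H := by
    by_contra! hsub
    have := Finset.card_le_card (show S ⊆ H from hsub)
    omega
  have hadj : ∀ v ∈ H, G.Adj u v := fun v hv =>
    adj_of_minDegree hconn hG hsat (a := m - #H + 1) (b := #H - 1) hdeg hHdeg (by omega) huS hv
      (fun h => huH (h ▸ hv))
  have := hmax (insert u H) ?_
  · rw [Finset.card_insert_of_notMem huH] at this
    omega
  · intro x hx
    rcases Finset.mem_insert.1 hx with rfl | hx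
    · have : H ⊆ {y ∈ insert x H | G.Adj x y} := fun y hy => by
        simp [hy, hadj y hy]
      have := Finset.card_le_card this
      omega
    · refine (hH x hx).trans_le (Finset.card_le_card ?_)
      exact Finset.filter_subset_filter _ (Finset.subset_insert _ _)

open Classical in
theorem sum_degree_erase (S : Finset V) {x : V} (hx : x ∈ S) :
    ∑ z ∈ S, #{y ∈ S | G.Adj z y} =
      ∑ z ∈ S.erase x, #{y ∈ S.erase x | G.Adj z y} + 2 * #{y ∈ S | G.Adj x y} := by
  have h1 : ∀ z ∈ S.erase x, #{y ∈ S | G.Adj z y} =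
      #{y ∈ S.erase x | G.Adj z y} + if G.Adj x z then 1 else 0 := by
    intro z hz
    conv_lhs => rw [← Finset.insert_erase hx]
    rw [Finset.filter_insert, G.adj_comm z x]
    split_ifs
    · rw [Finset.card_insert_of_notMem (by simp)]
    · rfl
  rw [← Finset.add_sum_erase _ _ hx, Finset.sum_congr rfl h1, Finset.sum_add_distrib,
    ← Finset.card_filter]
  have h2 : {z ∈ S.erase x | G.Adj x z} = {y ∈ S | G.Adj x y} := by
    ext y
    simp only [Finset.mem_filter, Finset.mem_erase]
    exact ⟨fun h => ⟨h.1.2, h.2⟩, fun h => ⟨⟨h.2.ne', h.1⟩, h.2⟩⟩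
  rw [h2]
  ring

open Classical in
theorem sum_degree_le_card (S : Finset V) :
    ∑ z ∈ S, #{y ∈ S | G.Adj z y} ≤ #S * (#S - 1) := by
  rw [← smul_eq_mul]
  refine Finset.sum_le_card_nsmul _ _ _ fun z hz => ?_
  rw [← Finset.card_erase_of_mem hz]
  refine Finset.card_le_card fun y hy => ?_
  rw [Finset.mem_filter] at hy
  exact Finset.mem_erase.2 ⟨hy.2.ne', hy.1⟩

open Classical in
theorem sum_degree_le_of_degenerate {a q : ℕ}
    (h : ∀ S : Finset V, q < #S → ∃ x ∈ S, #{y ∈ S | G.Adj x y} ≤ a) (j : ℕ) :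
    ∀ S : Finset V, #S = q + j →
      ∑ z ∈ S, #{y ∈ S | G.Adj z y} ≤ q * (q - 1) + 2 * a * j := by
  induction j with
  | zero =>
    intro S hS
    have := sum_degree_le_card (G := G) S
    rw [hS] at this
    simpa using this
  | succ j ih =>
    intro S hS
    obtain ⟨x, hx, hxa⟩ := h S (by omega)
    have := ih (S.erase x) (by rw [Finset.card_erase_of_mem hx]; omega)
    rw [sum_degree_erase S hx]
    linarith

open Classical in
/-- Kopylov's bound for connected graphs, up to the choice of the parameter `a`. -/
theorem exists_sum_degree_le [Fintype V] (hm : 1 ≤ m) (hconn : G.Preconnected)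
    (hG : PathBound G m) {j : ℕ} (hcard : Fintype.card V = m + j) :
    ∃ a, 2 * a + 1 ≤ m ∧
      ∑ z, #{y | G.Adj z y} ≤ (m - a) * (m - a - 1) + 2 * a * (j + a) := by
  obtain ⟨H, hGH, hH⟩ := (Set.toFinite {H : SimpleGraph V | PathBound H m}).exists_le_maximal hG
  obtain ⟨a, ha, hdeg⟩ := exists_threshold hm (hconn.mono hGH) hH.1 (saturated_of_maximal hH)
  refine ⟨a, ha, ?_⟩
  refine le_trans (Finset.sum_le_sum fun z _ => ?_)
    (sum_degree_le_of_degenerate hdeg (j + a) Finset.univ (by rw [Finset.card_univ]; omega))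
  exact Finset.card_le_card fun y hy => by
    simp only [Finset.mem_filter, Finset.mem_univ, true_and] at hy ⊢
    exact hGH hy

theorem deficit_add_le {a b r₁ r₂ r m s₁ s₂ s : ℕ} (hr₁ : r₁ < m) (hr₂ : r₂ < m) (hr : r < m)
    (h₁ : a = m * s₁ + r₁) (h₂ : b = m * s₂ + r₂) (h : a + b = m * s + r) :
    r * (m - r) ≤ r₁ * (m - r₁) + r₂ * (m - r₂) := by
  have hmod : r = (r₁ + r₂) % m := by
    have : (a + b) % m = r := by rw [h, Nat.mul_add_mod, Nat.mod_eq_of_lt hr]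
    rw [← this, h₁, h₂, Nat.add_mod, Nat.mul_add_mod, Nat.mul_add_mod, ← Nat.add_mod]
  by_cases hlt : r₁ + r₂ < m
  · rw [Nat.mod_eq_of_lt hlt] at hmod
    subst hmod
    zify [hr₁.le, hr₂.le, hr.le]
    nlinarith [mul_nonneg (Int.natCast_nonneg r₁) (Int.natCast_nonneg r₂)]
  · push Not at hlt
    rw [Nat.mod_eq_sub_mod hlt, Nat.mod_eq_of_lt (by omega)] at hmod
    obtain ⟨x, rfl⟩ := Nat.exists_eq_add_of_lt hr₁
    obtain ⟨y, hy⟩ := Nat.exists_eq_add_of_lt hr₂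
    have hx' : r₁ + x + 1 - r₁ = x + 1 := by omega
    have hy' : r₁ + x + 1 - r₂ = y + 1 := by omega
    have hr' : r₁ + x + 1 - r = x + 1 + (y + 1) := by omega
    rw [hx', hy', hr']
    have e1 : r₁ = r + (y + 1) := by omega
    have e2 : r₂ = r + (x + 1) := by omega
    rw [e1, e2]
    nlinarith

theorem deficit_connected {m a j : ℕ} (ha : 2 * a + 1 ≤ m) :
    (m - a) * (m - a - 1) + 2 * a * (j + a) + j % m * (m - j % m) ≤ (m + j) * (m - 1) := by
  have hlt : j % m < m := Nat.mod_lt _ (by omega)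
  have hle : j % m ≤ j := Nat.mod_le _ _
  generalize j % m = r at *
  obtain ⟨c, rfl⟩ := Nat.exists_eq_add_of_le ha
  obtain ⟨i, rfl⟩ := Nat.exists_eq_add_of_le hle
  have h1 : 2 * a + 1 + c - a = a + 1 + c := by omega
  have h2 : a + 1 + c - 1 = a + c := by omega
  have h3 : 2 * a + 1 + c - 1 = 2 * a + c := by omega
  rw [h1, h2, h3]
  zify [hlt.le]
  have key : (0 : ℤ) ≤ ((r : ℤ) - a) * (r - a - 1) := by
    rcases le_or_gt (r : ℤ) a with h | h
    · exact mul_nonneg_of_nonpos_of_nonpos (by linarith) (by linarith)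
    · exact mul_nonneg (by linarith) (by linarith [Int.add_one_le_of_lt h])
  nlinarith [mul_nonneg (Int.natCast_nonneg i) (Int.natCast_nonneg c),
    mul_nonneg (Int.natCast_nonneg a) (Int.natCast_nonneg c)]

theorem PathBound.comap {W : Type*} (f : W ↪ V) (hG : PathBound G m) :
    PathBound (G.comap f) m := by
  intro l hl hn
  have := hG (l.map f) ((List.isChain_map f).2 hl) (hn.map f.injective)
  simpa using this

open Classical in
theorem card_adj_subtype [Fintype V] {p : V → Prop} [Fintype {x // p x}]
    (hp : ∀ x y, p x → G.Adj x y → p y)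
    {H : SimpleGraph {x // p x}} (hH : H = G.comap (Function.Embedding.subtype p))
    (z : {x // p x}) : #{y | G.Adj z y} = #{y | H.Adj z y} := by
  rw [← Finset.card_map (Function.Embedding.subtype p)]
  congr 1
  ext y
  simp only [hH, Finset.mem_filter, Finset.mem_univ, true_and, Finset.mem_map, comap_adj,
    Function.Embedding.subtype_apply, Subtype.exists, exists_and_left, exists_prop]
  exact ⟨fun h => ⟨y, h, hp z y z.2 h, rfl⟩, by rintro ⟨_, h, _, rfl⟩; exact h⟩

open Classical in
theorem sum_degree_add_deficit_le.{u} (hm : 1 ≤ m) (N : ℕ) :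
    ∀ (V : Type u) [Fintype V] (G : SimpleGraph V), Fintype.card V = N → PathBound G m →
      ∑ z, #{y | G.Adj z y} + N % m * (m - N % m) ≤ N * (m - 1) := by
  induction N using Nat.strong_induction_on with
  | _ N ih =>
  intro V _ G hN hG
  rcases lt_or_ge N m with hlt | hge
  · have h := sum_degree_le_card (G := G) Finset.univ
    rw [Finset.card_univ, hN] at h
    rw [Nat.mod_eq_of_lt hlt]
    refine (Nat.add_le_add_right h _).trans ?_
    rw [← Nat.mul_add]
    rcases Nat.eq_zero_or_pos N with rfl | hpos
    · simp
    · exact Nat.mul_le_mul_left _ (by omega)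
  by_cases hconn : G.Preconnected
  · obtain ⟨j, rfl⟩ := Nat.exists_eq_add_of_le hge
    obtain ⟨a, ha, h⟩ := exists_sum_degree_le hm hconn hG hN
    rw [Nat.add_mod_left]
    exact (Nat.add_le_add_right h _).trans (deficit_connected ha)
  · simp only [Preconnected, not_forall] at hconn
    obtain ⟨u, v, huv⟩ := hconn
    obtain ⟨p, hpu, hpv, hp⟩ : ∃ p : V → Prop, p u ∧ ¬ p v ∧ ∀ x y, p x → G.Adj x y → p y :=
      ⟨G.Reachable u, Reachable.refl u, huv, fun x y hx hxy => hx.trans hxy.reachable⟩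
    have hp' : ∀ x y, ¬ p x → G.Adj x y → ¬ p y := fun x y hx hxy hy => hx (hp y x hy hxy.symm)
    have hcard := Fintype.card_subtype_compl p
    have hle := Fintype.card_subtype_le p
    have hpos : 0 < Fintype.card {x // p x} := Fintype.card_pos_iff.2 ⟨⟨u, hpu⟩⟩
    have hpos' : 0 < Fintype.card {x // ¬ p x} := Fintype.card_pos_iff.2 ⟨⟨v, hpv⟩⟩
    have h₁ := ih _ (by omega) {x // p x} (G.comap (Function.Embedding.subtype p))
      rfl (hG.comap _)
    have h₂ := ih _ (by omega) {x // ¬ p x} (G.comap (Function.Embedding.subtype _))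
      rfl (hG.comap _)
    have e₁ := Finset.sum_congr rfl fun z (_ : z ∈ Finset.univ) => card_adj_subtype hp rfl z
    have e₂ := Finset.sum_congr rfl fun z (_ : z ∈ Finset.univ) => card_adj_subtype hp' rfl z
    rw [← e₁] at h₁
    rw [← e₂] at h₂
    have hadd : Fintype.card {x // p x} + Fintype.card {x // ¬ p x} = N := by omega
    rw [← Fintype.sum_subtype_add_sum_subtype p, ← hadd, Nat.add_mul]
    have := deficit_add_le (Nat.mod_lt _ hm) (Nat.mod_lt _ hm) (Nat.mod_lt _ hm)
      (Nat.div_add_mod (Fintype.card {x // p x}) m).symm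
      (Nat.div_add_mod (Fintype.card {x // ¬ p x}) m).symm (Nat.div_add_mod _ m).symm
    omega

theorem pathBound_of_not_containsCopy (h : ¬ ContainsCopy G (pathGraph (m + 1))) :
    PathBound G m := by
  intro l hl hn
  by_contra! hlen
  refine h ⟨fun i => l[(i : ℕ)]'(by omega), fun i j hij => ?_, fun i j hij => ?_⟩
  · exact Fin.ext ((hn.getElem_inj_iff).1 hij)
  · rw [pathGraph_adj] at hij
    rcases hij with hij | hij
    · simpa only [hij] using hl.getElem i (by omega)
    · simpa only [hij] using (hl.getElem j (by omega)).symm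

open Classical in
theorem two_mul_edgeCount [Fintype V] (G : SimpleGraph V) :
    2 * edgeCount G = ∑ z, #{y | G.Adj z y} := by
  rw [edgeCount, Set.ncard_eq_toFinset_card', ← edgeFinset, ← sum_degrees_eq_twice_card_edges]
  refine Finset.sum_congr rfl fun z _ => ?_
  rw [← card_neighborFinset_eq_degree, neighborFinset_eq_filter]

/-- Disjoint cliques on consecutive blocks of `m` vertices. -/
def blockGraph (n m : ℕ) : SimpleGraph (Fin n) where
  Adj x y := x ≠ y ∧ (x : ℕ) / m = y / m
  symm := ⟨fun _ _ h => ⟨h.1.symm, h.2.symm⟩⟩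
  loopless := ⟨fun _ h => h.1 rfl⟩

theorem not_containsCopy_blockGraph (n : ℕ) (hm : 1 ≤ m) :
    ¬ ContainsCopy (blockGraph n m) (pathGraph (m + 1)) := by
  rintro ⟨f, hf, hadj⟩
  have hconst : ∀ i (hi : i < m + 1), (f ⟨i, hi⟩ : ℕ) / m = f 0 / m := by
    intro i
    induction i with
    | zero => intro _; rfl
    | succ i ih =>
      intro hi
      rw [← ih (by omega)]
      exact (hadj ⟨i, by omega⟩ ⟨i + 1, hi⟩ (by simp [pathGraph_adj])).2.symm
  have hinj : Function.Injective fun i : Fin (m + 1) =>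
      (⟨f i % m, Nat.mod_lt _ hm⟩ : Fin m) := by
    intro i j hij
    refine hf (Fin.ext ?_)
    rw [← Nat.div_add_mod (f i : ℕ) m, ← Nat.div_add_mod (f j : ℕ) m, hconst i i.2,
      hconst j j.2, Fin.mk.inj hij]
  simpa using Fintype.card_le_of_injective _ hinj

open Classical in
theorem le_card_adj_blockGraph {n m b w : ℕ} (x : Fin n) (hw : w ≤ m)
    (hb : m * b + w ≤ n) (hx₁ : m * b ≤ x) (hx₂ : (x : ℕ) < m * b + w) :
    w - 1 ≤ #{y | (blockGraph n m).Adj x y} := by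
  have hdiv : ∀ y, m * b ≤ y → y < m * b + w → y / m = b := fun y h₁ h₂ =>
    Nat.div_eq_of_lt_le (by rwa [Nat.mul_comm]) (by rw [Nat.mul_comm, Nat.mul_succ]; omega)
  have hlt : ∀ y ∈ (Finset.Ico (m * b) (m * b + w)).erase x, y < n := by
    intro y hy
    simp only [Finset.mem_erase, Finset.mem_Ico] at hy
    omega
  have hsub : ((Finset.Ico (m * b) (m * b + w)).erase x).attachFin hlt ⊆
      ({y | (blockGraph n m).Adj x y} : Finset (Fin n)) := by
    intro y hy
    simp only [Finset.mem_attachFin, Finset.mem_erase, Finset.mem_Ico] at hy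
    simp only [Finset.mem_filter, Finset.mem_univ, true_and]
    refine ⟨fun h => hy.1 (by rw [h]), ?_⟩
    rw [hdiv x hx₁ hx₂, hdiv y hy.2.1 hy.2.2]
  have := Finset.card_le_card hsub
  rw [Finset.card_attachFin, Finset.card_erase_of_mem (by simp [hx₁, hx₂]), Nat.card_Ico] at this
  omega

theorem two_mul_choose_two (n : ℕ) : 2 * n.choose 2 = n * (n - 1) := by
  rw [Nat.choose_two_right, Nat.mul_div_cancel' (Nat.even_mul_pred_self n).two_dvd]

theorem le_edgeCount_blockGraph {s r : ℕ} (hm : 1 ≤ m) (hr : r < m) :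
    s * m.choose 2 + r.choose 2 ≤ edgeCount (blockGraph (s * m + r) m) := by
  classical
  have h : s * m * (m - 1) + r * (r - 1) ≤
      ∑ z, #{y | (blockGraph (s * m + r) m).Adj z y} := by
    rw [Fin.sum_univ_add]
    refine Nat.add_le_add ?_ ?_
    · have := Finset.card_nsmul_le_sum (Finset.univ : Finset (Fin (s * m)))
        (fun z => #{y | (blockGraph (s * m + r) m).Adj (Fin.castAdd r z) y}) (m - 1) ?_
      · simpa using this
      · intro z _
        have hz : (z : ℕ) / m < s := (Nat.div_lt_iff_lt_mul hm).2 z.2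
        have hdm := Nat.div_add_mod (z : ℕ) m
        have hmod := Nat.mod_lt (z : ℕ) hm
        refine le_card_adj_blockGraph (b := z / m) _ le_rfl ?_ ?_ ?_
        · have := Nat.mul_le_mul_left m (Nat.succ_le_of_lt hz)
          rw [Nat.mul_succ, Nat.mul_comm m s] at this
          omega
        · simp only [Fin.val_castAdd]; omega
        · simp only [Fin.val_castAdd]; omega
    · have := Finset.card_nsmul_le_sum (Finset.univ : Finset (Fin r))
        (fun z => #{y | (blockGraph (s * m + r) m).Adj (Fin.natAdd (s * m) z) y}) (r - 1) ?_
      · simpa using this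
      · intro z _
        have hz := z.2
        have hsm := Nat.mul_comm m s
        refine le_card_adj_blockGraph (b := s) _ hr.le ?_ ?_ ?_
        · omega
        · simp only [Fin.val_natAdd]; omega
        · simp only [Fin.val_natAdd]; omega
  rw [← two_mul_edgeCount, Nat.mul_assoc, ← two_mul_choose_two, ← two_mul_choose_two] at h
  linarith

theorem edgeCount_le {s r : ℕ} (hr : r < m) (G : SimpleGraph (Fin (s * m + r)))
    (hG : PathBound G m) : edgeCount G ≤ s * m.choose 2 + r.choose 2 := by
  classical
  have h := sum_degree_add_deficit_le (by omega) _ _ G (Fintype.card_fin _) hG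
  rw [← two_mul_edgeCount, Nat.mul_add_mod', Nat.mod_eq_of_lt hr] at h
  have hsplit : r * (m - 1) = r * (r - 1) + r * (m - r) := by
    rcases Nat.eq_zero_or_pos r with rfl | hpos
    · simp
    · rw [← Nat.mul_add]
      congr 1
      omega
  rw [Nat.add_mul, hsplit, Nat.mul_assoc, ← two_mul_choose_two, ← two_mul_choose_two] at h
  linarith

end PathTuran

/-- Faudree–Schelp; Kopylov. Let `k ≥ 3` and write
`n = s(k-1) + r` with `0 ≤ r ≤ k-2`. Then `ex(n, P_k) = s·C(k-1,2) + C(r,2)`. -/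
theorem turan_path (k n s r : ℕ) (hk : 3 ≤ k) (hn : n = s * (k - 1) + r)
    (hr : r ≤ k - 2) :
    exNum n (pathGraph k) = s * ((k - 1).choose 2) + r.choose 2 := by
  obtain ⟨m, rfl⟩ : ∃ m, k = m + 1 := ⟨k - 1, by omega⟩
  have hrm : r < m := by omega
  rw [Nat.add_sub_cancel] at hn ⊢
  subst hn
  refine IsGreatest.csSup_eq ⟨?_, ?_⟩
  · have hfree := PathTuran.not_containsCopy_blockGraph (s * m + r) (m := m) (by omega)
    exact ⟨_, hfree, le_antisymm
      (PathTuran.edgeCount_le hrm _ (PathTuran.pathBound_of_not_containsCopy hfree))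
      (PathTuran.le_edgeCount_blockGraph (by omega) hrm)⟩
  · rintro _ ⟨G, hG, rfl⟩
    exact PathTuran.edgeCount_le hrm G (PathTuran.pathBound_of_not_containsCopy hG)
end

section
/- Let k1 ≥ 2, k2 ≥ 1 with k1 ≥ k2, and set k = k1 + k2 + 1. Then for every vertex v of H_k(1), the graph H_k(1) − v contains P_{2k1+1} ∪ P_{2k2+1} as a subgraph; and for every vertex v of H_k(M_2), the graph H_k(M_2) − v contains P_{2k1+1} ∪ P_{2k2+1} as a subgraph. -/
open SimpleGraph

open SimpleGraph

/-- Membership (as 0-indexed natural) in the set `C` of `H_k(s)`: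
`C = {x_{s+1}, x_{s+3}, …, x_{2k-s+1}}` (1-indexed). -/
def inC_HkS (k s i : ℕ) : Prop := s ≤ i ∧ i ≤ 2 * k - s ∧ (i - s) % 2 = 0

/-- Membership in the set `D` of `H_k(s)`: `D = {x_{s+2}, …, x_{2k-s}}` (1-indexed). -/
def inD_HkS (k s i : ℕ) : Prop := s ≤ i ∧ i ≤ 2 * k - s ∧ (i - s) % 2 = 1

/-- The graph `H_k(s)`: the path `x_1 … x_{2k+1}` (here 0-indexed on `Fin (2k+1)`),
plus all edges inside `A = {x_1,…,x_s}`, all edges inside `B = {x_{2k-s+2},…,x_{2k+1}}`,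
and all edges between `A ∪ B` and `C = {x_{s+1}, x_{s+3}, …, x_{2k-s+1}}`. -/
def HkS (k s : ℕ) : SimpleGraph (Fin (2 * k + 1)) :=
  SimpleGraph.fromRel (fun x y =>
    ((y : ℕ) = (x : ℕ) + 1) ∨
    ((x : ℕ) < s ∧ (y : ℕ) < s) ∨
    (2 * k - s + 1 ≤ (x : ℕ) ∧ 2 * k - s + 1 ≤ (y : ℕ)) ∨
    (((x : ℕ) < s ∨ 2 * k - s + 1 ≤ (x : ℕ)) ∧ inC_HkS k s (y : ℕ)))

/-- Membership in the part `C` (of size `k-1`) of `H_k(M_2)` (0-indexed):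
`C = {x_3, x_5, …, x_{2k-1}}` (1-indexed). -/
def inC_HkM2 (k i : ℕ) : Prop := 2 ≤ i ∧ i ≤ 2 * k - 2 ∧ i % 2 = 0

/-- Membership in `D` of `H_k(M_2)` (0-indexed): `D = {x_4, x_6, …, x_{2k-2}}` (1-indexed). -/
def inD_HkM2 (k i : ℕ) : Prop := 3 ≤ i ∧ i ≤ 2 * k - 3 ∧ i % 2 = 1

/-- The graph `H_k(M_2)`: the complete bipartite graph with parts
`C = {x_3,x_5,…,x_{2k-1}}` (size `k-1`) and `A ∪ B ∪ D` (size `k+2`), where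
`A = {x_1,x_2}`, `B = {x_{2k},x_{2k+1}}`, `D = {x_4,…,x_{2k-2}}`, together with the
matching edges `x_1x_2` and `x_{2k}x_{2k+1}` (here 0-indexed on `Fin (2k+1)`). -/
def HkM2 (k : ℕ) : SimpleGraph (Fin (2 * k + 1)) :=
  SimpleGraph.fromRel (fun x y =>
    ((x : ℕ) = 0 ∧ (y : ℕ) = 1) ∨
    ((x : ℕ) = 2 * k - 1 ∧ (y : ℕ) = 2 * k) ∨
    (inC_HkM2 k (x : ℕ) ∧ ¬ inC_HkM2 k (y : ℕ)))

/-- Membership in the part `B = {b_1, …, b_{k-1}}` of `H_k(P_3)`; on `Fin (2k+1)` we take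
`a_1 = 0, a_2 = 1, a_3 = 2`, `B = {3, …, k+1}`, `C = {k+2, …, 2k}`. -/
def inB_HkP3 (k i : ℕ) : Prop := 3 ≤ i ∧ i ≤ k + 1

/-- Membership in the set `C = {c_1, …, c_{k-1}}` of `H_k(P_3)`. -/
def inC_HkP3 (k i : ℕ) : Prop := k + 2 ≤ i ∧ i ≤ 2 * k

/-- The graph `H_k(P_3)`: the complete bipartite graph `K_{k-1,k+2}` with parts
`B = {b_1,…,b_{k-1}}` and `A ∪ C` where `A = {a_1,a_2,a_3}`, `C = {c_1,…,c_{k-1}}`,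
plus the edges `a_1a_2` and `a_2a_3`. Here `a_1 = 0, a_2 = 1, a_3 = 2`,
`B = {3,…,k+1}`, `C = {k+2,…,2k}` on `Fin (2k+1)`. -/
def HkP3 (k : ℕ) : SimpleGraph (Fin (2 * k + 1)) :=
  SimpleGraph.fromRel (fun x y =>
    ((x : ℕ) = 0 ∧ (y : ℕ) = 1) ∨
    ((x : ℕ) = 1 ∧ (y : ℕ) = 2) ∨
    (inB_HkP3 k (x : ℕ) ∧ ¬ inB_HkP3 k (y : ℕ)))

/-- The graph `F_k(t)`: the path `x_1 … x_{2k+t}` (0-indexed on `Fin (2k+t)`), plus all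
edges inside `A = {x_1,…,x_k}`, all edges inside `B = {x_{k+t+1},…,x_{2k+t}}`, all edges
between `x_k` and `B`, and all edges between `x_{k+t+1}` and `A`. -/
def FkT (k t : ℕ) : SimpleGraph (Fin (2 * k + t)) :=
  SimpleGraph.fromRel (fun x y =>
    ((y : ℕ) = (x : ℕ) + 1) ∨
    ((x : ℕ) < k ∧ (y : ℕ) < k) ∨
    (k + t ≤ (x : ℕ) ∧ k + t ≤ (y : ℕ)) ∨
    ((x : ℕ) = k - 1 ∧ k + t ≤ (y : ℕ)) ∨
    ((x : ℕ) = k + t ∧ (y : ℕ) < k))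

/-- The graph `H(n,k,a)`: vertices `{0,…,k-2a-1} = A`, `{k-2a,…,k-a-1} = B`,
`{k-a,…,n-1} = C`; all edges inside `A ∪ B` and all edges between `B` and `C`. -/
def Hgraph (n k a : ℕ) : SimpleGraph (Fin n) :=
  SimpleGraph.fromRel (fun x y =>
    ((x : ℕ) < k - a ∧ (y : ℕ) < k - a) ∨
    (k - 2 * a ≤ (x : ℕ) ∧ (x : ℕ) < k - a ∧ k - a ≤ (y : ℕ)))

/-- The graph `Z(n,k,t)` (for `n = (k-t-2) + ℓ(t-1) + 2`): two universal mutually adjacent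
vertices `0, 1`, a clique `K_{k-t-2}` on `{2,…,k-t-1}`, and consecutive blocks of size
`t-1` on the remaining vertices, each forming a clique `K_{t-1}`. -/
def Zgraph (n k t : ℕ) : SimpleGraph (Fin n) :=
  SimpleGraph.fromRel (fun x y =>
    ((x : ℕ) < 2) ∨ ((y : ℕ) < 2) ∨
    (2 ≤ (x : ℕ) ∧ (x : ℕ) < k - t ∧ 2 ≤ (y : ℕ) ∧ (y : ℕ) < k - t) ∨
    (k - t ≤ (x : ℕ) ∧ k - t ≤ (y : ℕ) ∧
      ((x : ℕ) - (k - t)) / (t - 1) = ((y : ℕ) - (k - t)) / (t - 1)))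

/-- Two injective sequences with disjoint ranges that avoid `v` and whose consecutive terms are
adjacent in `G` give a copy of a disjoint union of two paths in `G - v`. -/
theorem containsCopy_induce_pathGraph_sum {n a b : ℕ} {G : SimpleGraph (Fin n)} {v : Fin n}
    (f g : ℕ → ℕ)
    (hf : ∀ i < a, f i < n ∧ f i ≠ v) (hg : ∀ i < b, g i < n ∧ g i ≠ v)
    (hfinj : ∀ i < a, ∀ j < a, f i = f j → i = j)
    (hginj : ∀ i < b, ∀ j < b, g i = g j → i = j)
    (hfg : ∀ i < a, ∀ j < b, f i ≠ g j)
    (hfadj : ∀ i, i + 1 < a → ∀ x y : Fin n, x.val = f i → y.val = f (i + 1) → G.Adj x y)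
    (hgadj : ∀ i, i + 1 < b → ∀ x y : Fin n, x.val = g i → y.val = g (i + 1) → G.Adj x y) :
    ContainsCopy (G.induce {u | u ≠ v}) (pathGraph a ⊕g pathGraph b) := by
  refine ⟨Sum.elim
    (fun i => ⟨⟨f i, (hf i i.2).1⟩, fun h => (hf i i.2).2 (congrArg Fin.val h)⟩)
    (fun i => ⟨⟨g i, (hg i i.2).1⟩, fun h => (hg i i.2).2 (congrArg Fin.val h)⟩), ?_, ?_⟩
  · rintro (i | i) (j | j) h <;> simp only [Sum.elim_inl, Sum.elim_inr, Subtype.mk.injEq,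
      Fin.mk.injEq] at h
    · exact congrArg _ (Fin.ext (hfinj i i.2 j j.2 h))
    · exact absurd h (hfg i i.2 j j.2)
    · exact absurd h.symm (hfg j j.2 i i.2)
    · exact congrArg _ (Fin.ext (hginj i i.2 j j.2 h))
  · rintro (i | i) (j | j) h
    · rcases pathGraph_adj.1 h with h | h
      · exact hfadj i (h ▸ j.2) _ _ rfl (congrArg f h.symm)
      · exact (hfadj j (h ▸ i.2) _ _ rfl (congrArg f h.symm)).symm
    · exact absurd h (by simp)
    · exact absurd h (by simp)
    · rcases pathGraph_adj.1 h with h | h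
      · exact hgadj i (h ▸ j.2) _ _ rfl (congrArg g h.symm)
      · exact (hgadj j (h ▸ i.2) _ _ rfl (congrArg g h.symm)).symm

theorem HkS_one_delete_vertex (k1 k2 : ℕ) (v : Fin (2 * (k1 + k2 + 1) + 1)) :
    ContainsCopy ((HkS (k1 + k2 + 1) 1).induce {u | u ≠ v})
      ((pathGraph (2 * k1 + 1)) ⊕g (pathGraph (2 * k2 + 1))) := by
  obtain ⟨w, hw⟩ := v
  rcases le_or_gt (2 * k1 + 1) w with h | h
  · apply containsCopy_induce_pathGraph_sum (fun i => i)
      (fun i => if w + 1 + i ≤ 2 * (k1 + k2 + 1) then w + 1 + i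
        else w + 1 + i + 2 * k1 - 2 * (k1 + k2 + 1)) <;>
      try simp only [HkS, inC_HkS, fromRel_adj, ne_eq, Fin.ext_iff]
    all_goals intros; grind (splits := 14)
  · apply containsCopy_induce_pathGraph_sum
      (fun i => if i < w then w - 1 - i else 2 * k1 + 1 + w - i)
      (fun i => 2 * k1 + 2 + i) <;>
      try simp only [HkS, inC_HkS, fromRel_adj, ne_eq, Fin.ext_iff]
    all_goals intros; grind

theorem HkM2_delete_vertex_of_mem {k1 k2 : ℕ} (hk1 : 2 ≤ k1)
    (v : Fin (2 * (k1 + k2 + 1) + 1)) (hv : inC_HkM2 (k1 + k2 + 1) v) :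
    ContainsCopy ((HkM2 (k1 + k2 + 1)).induce {u | u ≠ v})
      ((pathGraph (2 * k1 + 1)) ⊕g (pathGraph (2 * k2 + 1))) := by
  obtain ⟨w, hw⟩ := v
  simp only [inC_HkM2] at hv
  apply containsCopy_induce_pathGraph_sum
    (fun i => if 2 * k1 - 1 ≤ i then i + 2 * k2 + 2
      else if i ≤ 1 ∨ i % 2 = 1 ∨ i < w then i else i + 2)
    (fun i => if i % 2 = 0 ∨ 2 * k1 - 1 + i < w then 2 * k1 - 1 + i else 2 * k1 + 1 + i) <;>
    try simp only [HkM2, inC_HkM2, fromRel_adj, ne_eq, Fin.ext_iff]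
  all_goals intros; grind

/-- An enumeration, along `e = 0, 2, …, 2k`, of the vertices of `H_k(M_2)` other than `w`
outside the part of size `k - 1`. -/
def HkM2LargePart (k w e : ℕ) : ℕ :=
  if e - 1 < w then e - 1 else if e < 2 * k then e + 1 else 2 * k

theorem HkM2_delete_vertex_of_notMem {k1 k2 : ℕ}
    (v : Fin (2 * (k1 + k2 + 1) + 1)) (hv : ¬ inC_HkM2 (k1 + k2 + 1) v) :
    ContainsCopy ((HkM2 (k1 + k2 + 1)).induce {u | u ≠ v})
      ((pathGraph (2 * k1 + 1)) ⊕g (pathGraph (2 * k2 + 1))) := by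
  obtain ⟨w, hw⟩ := v
  simp only [inC_HkM2] at hv
  apply containsCopy_induce_pathGraph_sum
    (fun i => if i % 2 = 0 then HkM2LargePart (k1 + k2 + 1) w i else i + 1)
    (fun i => if i % 2 = 0 then HkM2LargePart (k1 + k2 + 1) w (2 * k1 + 2 + i)
      else 2 * k1 + 1 + i) <;>
    try simp only [HkM2, inC_HkM2, HkM2LargePart, fromRel_adj, ne_eq, Fin.ext_iff]
  all_goals intros; grind

/-- Let `k1 ≥ 2`, `k2 ≥ 1`, `k1 ≥ k2`, `k = k1 + k2 + 1`. Then
deleting any vertex of `H_k(1)` or of `H_k(M_2)` leaves a graph containing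
`P_{2k1+1} ∪ P_{2k2+1}` as a subgraph. -/
theorem HkS_one_and_HkM2_delete_vertex (k1 k2 : ℕ) (hk1 : 2 ≤ k1) (hk2 : 1 ≤ k2)
    (hk12 : k2 ≤ k1) :
    (∀ v : Fin (2 * (k1 + k2 + 1) + 1),
      ContainsCopy ((HkS (k1 + k2 + 1) 1).induce {u | u ≠ v})
        ((pathGraph (2 * k1 + 1)) ⊕g (pathGraph (2 * k2 + 1)))) ∧
    (∀ v : Fin (2 * (k1 + k2 + 1) + 1),
      ContainsCopy ((HkM2 (k1 + k2 + 1)).induce {u | u ≠ v})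
        ((pathGraph (2 * k1 + 1)) ⊕g (pathGraph (2 * k2 + 1)))) := by
  refine ⟨HkS_one_delete_vertex k1 k2, fun v => ?_⟩
  by_cases hv : inC_HkM2 (k1 + k2 + 1) v
  · exact HkM2_delete_vertex_of_mem hk1 v hv
  · exact HkM2_delete_vertex_of_notMem v hv
end

section
/- Let k ≥ 4 and 1 ≤ s ≤ k−2. Then every edge of H_k(s) is contained in a cycle of length 2k in H_k(s); likewise, every edge of H_k(M_2) is contained in a cycle of length 2k in H_k(M_2). -/
open SimpleGraph

open SimpleGraph

/-- The pair `e` is an edge of some cycle of length `n` in `G`. -/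
def LiesOnCycle {V : Type*} (G : SimpleGraph V) (n : ℕ) (e : Sym2 V) : Prop :=
  ∃ (v : V) (c : G.Walk v v), c.IsCycle ∧ c.length = n ∧ e ∈ c.edges

theorem exists_walk_of_adj_succ {V : Type*} {G : SimpleGraph V} (f : ℕ → V) (n : ℕ)
    (hadj : ∀ i < n, G.Adj (f i) (f (i + 1))) :
    ∃ w : G.Walk (f 0) (f n), w.support = (List.range (n + 1)).map f ∧
      w.edges = (List.range n).map (fun i => s(f i, f (i + 1))) := by
  induction n with
  | zero => exact ⟨Walk.nil, by simp, by simp⟩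
  | succ n ih =>
    obtain ⟨w, hsupp, hedges⟩ := ih fun i hi => hadj i (by omega)
    refine ⟨w.concat (hadj n (by omega)), ?_, ?_⟩
    · rw [Walk.support_concat, hsupp, List.range_succ (n := n + 1)]
      simp
    · rw [Walk.edges_concat, hedges, List.range_succ (n := n)]
      simp

/-- An injective cyclic sequence of `n + 1 ≥ 3` consecutively adjacent vertices traces a cycle. -/
theorem liesOnCycle_of_adj_succ {V : Type*} {G : SimpleGraph V} (f : ℕ → V) (n : ℕ) (hn : 2 ≤ n)
    (hinj : ∀ i ≤ n, ∀ j ≤ n, f i = f j → i = j)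
    (hadj : ∀ i < n, G.Adj (f i) (f (i + 1))) (hlast : G.Adj (f n) (f 0)) :
    ∀ i < n, LiesOnCycle G (n + 1) s(f i, f (i + 1)) := by
  intro i hi
  obtain ⟨w, hsupp, hedges⟩ := exists_walk_of_adj_succ f n hadj
  refine ⟨f n, Walk.cons hlast w, ?_, ?_, ?_⟩
  · rw [Walk.cons_isCycle_iff, Walk.isPath_def, hsupp, hedges]
    constructor
    · refine List.nodup_range.map_on fun a ha b hb hab => ?_
      rw [List.mem_range] at ha hb
      exact hinj a (by omega) b (by omega) hab
    · simp only [List.mem_map, List.mem_range, not_exists, not_and]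
      intro j hj hedge
      rcases Sym2.eq_iff.1 hedge with ⟨h, -⟩ | ⟨h, h'⟩
      · have := hinj _ (by omega) _ (by omega) h
        omega
      · have := hinj _ (by omega) _ (by omega) h
        have := hinj _ (by omega) _ (by omega) h'
        omega
  · rw [Walk.length_cons, ← Walk.length_edges, hedges]
    simp
  · rw [Walk.edges_cons, hedges]
    exact List.mem_cons_of_mem _ (List.mem_map.2 ⟨i, List.mem_range.2 hi, rfl⟩)

theorem LiesOnCycle.map {V W : Type*} {G : SimpleGraph V} {H : SimpleGraph W} {n : ℕ} {x y : V}
    (φ : G →g H) (hφ : Function.Injective φ) (h : LiesOnCycle G n s(x, y)) :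
    LiesOnCycle H n s(φ x, φ y) := by
  obtain ⟨v, c, hc, hlen, he⟩ := h
  refine ⟨φ v, c.map φ, hc.map hφ, by simpa using hlen, ?_⟩
  rw [Walk.edges_map]
  exact List.mem_map.2 ⟨_, he, rfl⟩

theorem LiesOnCycle.symm {V : Type*} {G : SimpleGraph V} {n : ℕ} {x y : V}
    (h : LiesOnCycle G n s(x, y)) : LiesOnCycle G n s(y, x) := by
  rwa [Sym2.eq_swap]

/-- Vertices with the same neighbours outside the pair can be exchanged at an edge. -/
theorem LiesOnCycle.replace_twin {V : Type*} {G : SimpleGraph V} {n : ℕ} {x u v : V}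
    (htwin : ∀ w, w ≠ u → w ≠ v → (G.Adj u w ↔ G.Adj v w)) (hxu : x ≠ u) (hxv : x ≠ v)
    (h : LiesOnCycle G n s(x, u)) : LiesOnCycle G n s(x, v) := by
  classical
  let φ : G →g G := ⟨Equiv.swap u v, by
    intro a b hab
    have h₁ := htwin a
    have h₂ := htwin b
    have hne := hab.ne
    simp only [Equiv.swap_apply_def]
    split_ifs <;> subst_vars <;> simp_all [G.adj_comm]⟩
  have hmap := h.map φ (Equiv.swap u v).injective
  simpa [φ, Equiv.swap_apply_of_ne_of_ne hxu hxv] using hmap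

theorem hkS_adj_iff {k s : ℕ} (x y : Fin (2 * k + 1)) :
    (HkS k s).Adj x y ↔ (x : ℕ) ≠ y ∧
      ((y : ℕ) = x + 1 ∨ (x : ℕ) = y + 1 ∨ ((x : ℕ) < s ∧ (y : ℕ) < s) ∨
      (2 * k - s + 1 ≤ (x : ℕ) ∧ 2 * k - s + 1 ≤ (y : ℕ)) ∨
      (((x : ℕ) < s ∨ 2 * k - s + 1 ≤ (x : ℕ)) ∧
        s ≤ (y : ℕ) ∧ (y : ℕ) ≤ 2 * k - s ∧ ((y : ℕ) - s) % 2 = 0) ∨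
      (((y : ℕ) < s ∨ 2 * k - s + 1 ≤ (y : ℕ)) ∧
        s ≤ (x : ℕ) ∧ (x : ℕ) ≤ 2 * k - s ∧ ((x : ℕ) - s) % 2 = 0)) := by
  simp only [HkS, inC_HkS, SimpleGraph.fromRel_adj, ne_eq, Fin.ext_iff]
  tauto

theorem hkM2_adj_iff {k : ℕ} (x y : Fin (2 * k + 1)) :
    (HkM2 k).Adj x y ↔ (x : ℕ) ≠ y ∧
      (((x : ℕ) = 0 ∧ (y : ℕ) = 1) ∨ ((y : ℕ) = 0 ∧ (x : ℕ) = 1) ∨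
      ((x : ℕ) = 2 * k - 1 ∧ (y : ℕ) = 2 * k) ∨ ((y : ℕ) = 2 * k - 1 ∧ (x : ℕ) = 2 * k) ∨
      (inC_HkM2 k x ∧ ¬ inC_HkM2 k y) ∨ (inC_HkM2 k y ∧ ¬ inC_HkM2 k x)) := by
  simp only [HkM2, SimpleGraph.fromRel_adj, ne_eq, Fin.ext_iff]
  tauto

/-- The position-`i` vertex of the cycle in `H_k(s)` that omits the vertex `p` of `D`: it runs
through `A`, then `s, …, p - 1`, then `B`, then `p + 1, …, 2k - s`. -/
def cycleSkipping (k s p i : ℕ) : ℕ :=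
  if i < p then i else if i < p + s then i + (2 * k - s + 1) - p else i + 1 - s

section HkS

variable {k s : ℕ}

/-- Consecutive vertices of the cycle omitting `p ∈ D` span edges on a `2k`-cycle. -/
theorem liesOnCycle_of_cycleSkipping (hk : 4 ≤ k) (hs1 : 1 ≤ s) {p : ℕ}
    (hp1 : s < p) (hp2 : p < 2 * k - s) (hp3 : (p - s) % 2 = 1) (i : ℕ) (hi : i + 1 < 2 * k)
    {x y : Fin (2 * k + 1)} (hx : (x : ℕ) = cycleSkipping k s p i)
    (hy : (y : ℕ) = cycleSkipping k s p (i + 1)) :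
    LiesOnCycle (HkS k s) (2 * k) s(x, y) := by
  have hval : ∀ j ≤ 2 * k - 1, (Fin.ofNat (2 * k + 1) (cycleSkipping k s p j) : ℕ) =
      cycleSkipping k s p j := by
    intro j hj
    refine Nat.mod_eq_of_lt ?_
    unfold cycleSkipping
    split_ifs <;> omega
  have key := liesOnCycle_of_adj_succ (G := HkS k s)
    (fun j => Fin.ofNat (2 * k + 1) (cycleSkipping k s p j)) (2 * k - 1) (by omega) ?_ ?_ ?_ i
    (by omega)
  · have hx' : x = Fin.ofNat (2 * k + 1) (cycleSkipping k s p i) :=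
      Fin.ext (by rw [hval i (by omega), hx])
    have hy' : y = Fin.ofNat (2 * k + 1) (cycleSkipping k s p (i + 1)) :=
      Fin.ext (by rw [hval (i + 1) (by omega), hy])
    rw [hx', hy']
    rwa [show 2 * k - 1 + 1 = 2 * k by omega] at key
  · intro a ha b hb hab
    have := congrArg Fin.val hab
    simp only [hval a ha, hval b hb] at this
    unfold cycleSkipping at this
    split_ifs at this <;> omega
  · intro a ha
    rw [hkS_adj_iff, hval a (by omega), hval (a + 1) (by omega)]
    unfold cycleSkipping
    split_ifs <;> omega
  · rw [hkS_adj_iff, hval _ le_rfl, hval 0 (by omega)]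
    unfold cycleSkipping
    split_ifs <;> omega

theorem hkS_twin_of_lt {u v : Fin (2 * k + 1)} (hsk : s ≤ k) (hu : (u : ℕ) < s) (hv : (v : ℕ) < s)
    (w : Fin (2 * k + 1)) (hwu : w ≠ u) (hwv : w ≠ v) :
    (HkS k s).Adj u w ↔ (HkS k s).Adj v w := by
  rw [ne_eq, Fin.ext_iff] at hwu hwv
  rw [hkS_adj_iff, hkS_adj_iff]
  omega

theorem hkS_twin_of_ge {u v : Fin (2 * k + 1)} (hsk : s ≤ k) (hu : 2 * k - s + 1 ≤ (u : ℕ))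
    (hv : 2 * k - s + 1 ≤ (v : ℕ)) (w : Fin (2 * k + 1)) (hwu : w ≠ u) (hwv : w ≠ v) :
    (HkS k s).Adj u w ↔ (HkS k s).Adj v w := by
  rw [ne_eq, Fin.ext_iff] at hwu hwv
  rw [hkS_adj_iff, hkS_adj_iff]
  omega

/-- Reversing the underlying path is an endomorphism of `H_k(s)`. -/
def hkSRev (hsk : s ≤ k) : HkS k s →g HkS k s :=
  ⟨Fin.rev, by
    intro a b hab
    rw [hkS_adj_iff] at hab ⊢
    rw [Fin.val_rev, Fin.val_rev]
    omega⟩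

theorem LiesOnCycle.of_hkS_rev (hsk : s ≤ k) {n : ℕ} {x y : Fin (2 * k + 1)}
    (h : LiesOnCycle (HkS k s) n s(x.rev, y.rev)) : LiesOnCycle (HkS k s) n s(x, y) := by
  have := h.map (hkSRev hsk) Fin.rev_injective
  simpa [hkSRev] using this

theorem hkS_liesOnCycle_path (hk : 4 ≤ k) (hs1 : 1 ≤ s) (hs2 : s ≤ k - 2)
    {x y : Fin (2 * k + 1)} (hx1 : s ≤ (x : ℕ)) (hx2 : (x : ℕ) < 2 * k - s)
    (hxy : (y : ℕ) = x + 1) : LiesOnCycle (HkS k s) (2 * k) s(x, y) := by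
  by_cases h : (x : ℕ) ≤ s + 1
  · refine liesOnCycle_of_cycleSkipping hk hs1 (p := s + 3) (by omega) (by omega) (by omega)
      x (by omega) ?_ ?_ <;> unfold cycleSkipping <;> split_ifs <;> omega
  · refine liesOnCycle_of_cycleSkipping hk hs1 (p := s + 1) (by omega) (by omega) (by omega)
      (x + s - 1) (by omega) ?_ ?_ <;> unfold cycleSkipping <;> split_ifs <;> omega

theorem hkS_liesOnCycle_inside_A (hk : 4 ≤ k) (hs1 : 1 ≤ s) (hs2 : s ≤ k - 2)
    {x y : Fin (2 * k + 1)} (hxy : (x : ℕ) < y) (hy : (y : ℕ) < s) :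
    LiesOnCycle (HkS k s) (2 * k) s(x, y) := by
  let v₀ : Fin (2 * k + 1) := ⟨0, by omega⟩
  let v₁ : Fin (2 * k + 1) := ⟨1, by omega⟩
  have h₀₁ : LiesOnCycle (HkS k s) (2 * k) s(v₀, v₁) := by
    refine liesOnCycle_of_cycleSkipping hk hs1 (p := s + 1) (by omega) (by omega) (by omega)
      0 (by omega) ?_ ?_ <;> simp only [cycleSkipping, v₀, v₁] <;> split_ifs <;> omega
  have h₀y : LiesOnCycle (HkS k s) (2 * k) s(v₀, y) :=
    h₀₁.replace_twin (hkS_twin_of_lt (by omega) (by simp [v₁]; omega) hy)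
      (by simp [v₀, v₁]) (by simp [v₀, Fin.ext_iff]; omega)
  refine (h₀y.symm.replace_twin (hkS_twin_of_lt (by omega) (by simp [v₀]; omega) (by omega))
    ?_ ?_).symm
  · rw [ne_eq, Fin.ext_iff]; simp only [v₀]; omega
  · rw [ne_eq, Fin.ext_iff]; omega

theorem hkS_liesOnCycle_C_B (hk : 4 ≤ k) (hs1 : 1 ≤ s) (hs2 : s ≤ k - 2)
    {x y : Fin (2 * k + 1)} (hx : inC_HkS k s x) (hy : 2 * k - s + 1 ≤ (y : ℕ)) :
    LiesOnCycle (HkS k s) (2 * k) s(x, y) := by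
  obtain ⟨hx1, hx2, hx3⟩ := hx
  have of_twin : ∀ b : Fin (2 * k + 1), 2 * k - s + 1 ≤ (b : ℕ) →
      LiesOnCycle (HkS k s) (2 * k) s(x, b) → LiesOnCycle (HkS k s) (2 * k) s(x, y) := by
    intro b hb h
    refine h.replace_twin (hkS_twin_of_ge (by omega) hb hy) ?_ ?_ <;>
      rw [ne_eq, Fin.ext_iff] <;> omega
  by_cases h : (x : ℕ) < 2 * k - s
  · refine of_twin ⟨2 * k - s + 1, by omega⟩ le_rfl ?_
    refine liesOnCycle_of_cycleSkipping hk hs1 (p := x + 1) (by omega) (by omega) (by omega)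
      x (by omega) ?_ ?_ <;> simp only [cycleSkipping] <;> split_ifs <;> omega
  · refine of_twin ⟨2 * k, by omega⟩ (by simp only; omega) (LiesOnCycle.symm ?_)
    refine liesOnCycle_of_cycleSkipping hk hs1 (p := x - 1) (by omega) (by omega) (by omega)
      (x + s - 2) (by omega) ?_ ?_ <;> simp only [cycleSkipping] <;> split_ifs <;> omega

theorem hkS_liesOnCycle_of_lt (hk : 4 ≤ k) (hs1 : 1 ≤ s) (hs2 : s ≤ k - 2)
    {x y : Fin (2 * k + 1)} (hlt : (x : ℕ) < y) (hadj : (HkS k s).Adj x y) :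
    LiesOnCycle (HkS k s) (2 * k) s(x, y) := by
  rw [hkS_adj_iff] at hadj
  by_cases hyA : (y : ℕ) < s
  · exact hkS_liesOnCycle_inside_A hk hs1 hs2 hlt hyA
  by_cases hxB : 2 * k - s + 1 ≤ (x : ℕ)
  · refine LiesOnCycle.of_hkS_rev (by omega) (LiesOnCycle.symm ?_)
    refine hkS_liesOnCycle_inside_A hk hs1 hs2 ?_ ?_ <;> simp only [Fin.val_rev] <;> omega
  by_cases hxA : (x : ℕ) < s
  · refine LiesOnCycle.of_hkS_rev (by omega) (LiesOnCycle.symm ?_)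
    refine hkS_liesOnCycle_C_B hk hs1 hs2 ⟨?_, ?_, ?_⟩ ?_ <;> simp only [Fin.val_rev] <;> omega
  by_cases hyB : 2 * k - s + 1 ≤ (y : ℕ)
  · exact hkS_liesOnCycle_C_B hk hs1 hs2 ⟨by omega, by omega, by omega⟩ hyB
  · exact hkS_liesOnCycle_path hk hs1 hs2 (by omega) (by omega) (by omega)

theorem hkS_liesOnCycle_of_adj (hk : 4 ≤ k) (hs1 : 1 ≤ s) (hs2 : s ≤ k - 2)
    {x y : Fin (2 * k + 1)} (hadj : (HkS k s).Adj x y) :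
    LiesOnCycle (HkS k s) (2 * k) s(x, y) := by
  rcases lt_or_gt_of_ne ((hkS_adj_iff x y).1 hadj).1 with h | h
  · exact hkS_liesOnCycle_of_lt hk hs1 hs2 h hadj
  · exact (hkS_liesOnCycle_of_lt hk hs1 hs2 h hadj.symm).symm

end HkS

section HkM2

variable {k : ℕ}

theorem hkS_two_le_hkM2 (hk : 4 ≤ k) : HkS k 2 ≤ HkM2 k := by
  intro x y h
  rw [hkS_adj_iff] at h
  rw [hkM2_adj_iff]
  unfold inC_HkM2
  omega

theorem hkM2_twin_of_inC {u v : Fin (2 * k + 1)} (hu : inC_HkM2 k u) (hv : inC_HkM2 k v)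
    (w : Fin (2 * k + 1)) : (HkM2 k).Adj u w ↔ (HkM2 k).Adj v w := by
  rw [hkM2_adj_iff, hkM2_adj_iff]
  unfold inC_HkM2 at *
  omega

theorem hkM2_liesOnCycle_of_hkS_two (hk : 4 ≤ k) {x y : Fin (2 * k + 1)}
    (h : (HkS k 2).Adj x y) : LiesOnCycle (HkM2 k) (2 * k) s(x, y) :=
  (hkS_liesOnCycle_of_adj hk (by omega) (by omega) h).map
    (Hom.ofLE (hkS_two_le_hkM2 hk)) Function.injective_id

theorem hkM2_liesOnCycle_inC (hk : 4 ≤ k) {x y : Fin (2 * k + 1)} (hx : inC_HkM2 k x)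
    (hy : ¬ inC_HkM2 k y) : LiesOnCycle (HkM2 k) (2 * k) s(x, y) := by
  by_cases hD : inD_HkM2 k y
  · obtain ⟨hy1, hy2, hy3⟩ := hD
    have hC : inC_HkM2 k (y + 1 : ℕ) := ⟨by omega, by omega, by omega⟩
    have hstep : LiesOnCycle (HkM2 k) (2 * k) s(y, ⟨y + 1, by omega⟩) :=
      hkM2_liesOnCycle_of_hkS_two hk ((hkS_adj_iff _ _).2 ⟨by simp, Or.inl rfl⟩)
    refine (hstep.replace_twin (fun w _ _ => hkM2_twin_of_inC hC hx w) ?_ ?_).symm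
    · simp [Fin.ext_iff]
    · rintro rfl
      exact hy hx
  · refine hkM2_liesOnCycle_of_hkS_two hk ((hkS_adj_iff _ _).2 ?_)
    unfold inC_HkM2 at hx hy
    unfold inD_HkM2 at hD
    omega

theorem hkM2_liesOnCycle_of_adj (hk : 4 ≤ k) {x y : Fin (2 * k + 1)} (h : (HkM2 k).Adj x y) :
    LiesOnCycle (HkM2 k) (2 * k) s(x, y) := by
  obtain ⟨-, h | h | h | h | ⟨hx, hy⟩ | ⟨hy, hx⟩⟩ := (hkM2_adj_iff x y).1 h
  iterate 4 exact hkM2_liesOnCycle_of_hkS_two hk ((hkS_adj_iff _ _).2 (by omega))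
  · exact hkM2_liesOnCycle_inC hk hx hy
  · exact (hkM2_liesOnCycle_inC hk hy hx).symm

end HkM2

/-- Let `k ≥ 4` and `1 ≤ s ≤ k-2`. Every edge of `H_k(s)` lies on a
cycle of length `2k` in `H_k(s)`, and every edge of `H_k(M_2)` lies on a cycle of
length `2k` in `H_k(M_2)`. -/
theorem HkS_HkM2_edges_on_long_cycle (k s : ℕ) (hk : 4 ≤ k) (hs1 : 1 ≤ s)
    (hs2 : s ≤ k - 2) :
    (∀ e ∈ (HkS k s).edgeSet, ∃ (v : Fin (2 * k + 1)) (c : (HkS k s).Walk v v),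
      c.IsCycle ∧ c.length = 2 * k ∧ e ∈ c.edges) ∧
    (∀ e ∈ (HkM2 k).edgeSet, ∃ (v : Fin (2 * k + 1)) (c : (HkM2 k).Walk v v),
      c.IsCycle ∧ c.length = 2 * k ∧ e ∈ c.edges) := by
  constructor
  · intro e he
    induction e with
    | _ x y => exact hkS_liesOnCycle_of_adj hk hs1 hs2 he
  · intro e he
    induction e with
    | _ x y => exact hkM2_liesOnCycle_of_adj hk he
end

section
/- Let k ≥ 4 and 1 ≤ s ≤ k−1. For any two distinct nonadjacent vertices u, v of H_k(s) both lying in A ∪ B ∪ D, the graph H_k(s) + uv has a Hamilton cycle (a cycle through all 2k+1 vertices). The same holds for H_k(M_2): for any two distinct nonadjacent vertices u, v of H_k(M_2) both lying in A ∪ B ∪ D, the graph H_k(M_2) + uv has a Hamilton cycle. -/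
open SimpleGraph

/-- A graph is 2-connected if it has at least 3 vertices and removing any
single vertex leaves a connected graph. -/
def TwoConnected {V : Type*} [Fintype V] (G : SimpleGraph V) : Prop :=
  3 ≤ Fintype.card V ∧ ∀ v : V, (G.induce ({v}ᶜ : Set V)).Connected

/-- The circumference of a graph: the length of a longest cycle
(`0` if there is no cycle). -/
noncomputable def circumference {V : Type*} (G : SimpleGraph V) : ℕ :=
  sSup {m | ∃ (v : V) (c : G.Walk v v), c.IsCycle ∧ c.length = m}

/-- The number of neighbours (in `G`) of `x` lying on the walk `p`. -/
noncomputable def degOn {V : Type*} (G : SimpleGraph V) {a b : V} (p : G.Walk a b) (x : V) : ℕ :=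
  {v | v ∈ p.support ∧ G.Adj x v}.ncard

/-- The graph obtained from `G` by adding the edge `uv`. -/
def addEdge {V : Type*} (G : SimpleGraph V) (u v : V) : SimpleGraph V :=
  G ⊔ SimpleGraph.fromEdgeSet {s(u, v)}

/-- The minimum degree of a graph (with classical decidability). -/
noncomputable def minDeg {V : Type*} [Fintype V] (G : SimpleGraph V) : ℕ :=
  @SimpleGraph.minDegree _ G _ (Classical.decRel _)
open SimpleGraph

/-- A cyclic enumeration of the vertices whose consecutive entries are adjacent
gives a Hamiltonian cycle. -/
theorem exists_isHamiltonianCycle_of_enumeration {n : ℕ} (hn : 3 ≤ n) (G : SimpleGraph (Fin n))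
    (f : ℕ → ℕ) (hlt : ∀ i < n, f i < n) (hinj : ∀ i j, i < j → j < n → f i ≠ f j)
    (hadj : ∀ i, i + 1 < n → ∀ x y : Fin n, (x : ℕ) = f i → (y : ℕ) = f (i + 1) → G.Adj x y)
    (hclose : ∀ x y : Fin n, (x : ℕ) = f (n - 1) → (y : ℕ) = f 0 → G.Adj x y) :
    ∃ (w : Fin n) (c : G.Walk w w), c.IsHamiltonianCycle := by
  obtain ⟨m, rfl⟩ := Nat.exists_eq_add_of_le' hn
  let g : Fin (m + 3) → Fin (m + 3) := fun i => ⟨f i, hlt i i.isLt⟩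
  have ginj : Function.Injective g := by
    intro i j hij
    have hij' : f i = f j := congrArg Fin.val hij
    rcases lt_trichotomy (i : ℕ) j with h | h | h
    · exact absurd hij' (hinj i j h j.isLt)
    · exact Fin.ext h
    · exact absurd hij'.symm (hinj j i h i.isLt)
  have succ_adj : ∀ a b : Fin (m + 3), b - a = 1 → G.Adj (g a) (g b) := by
    intro a b hab
    obtain rfl : b = a + 1 := by rw [← hab]; abel
    by_cases ha : a = Fin.last (m + 2)
    · subst ha
      exact hclose _ _ rfl (by simp [g])
    · have hlast := Fin.val_lt_last ha
      refine hadj a (by omega) _ _ rfl ?_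
      simp only [g, Fin.val_add_one_of_lt (Fin.lt_last_iff_ne_last.mpr ha)]
  let φ : cycleGraph (m + 3) →g G :=
    ⟨g, fun {a b} h => by
      rcases cycleGraph_adj.mp h with h | h
      · exact (succ_adj b a h).symm
      · exact succ_adj a b h⟩
  refine ⟨_, (cycleGraph.cycle m).map φ, Walk.IsHamiltonianCycle.map
    (Finite.injective_iff_bijective.mp ginj) ?_⟩
  rw [Walk.isHamiltonianCycle_iff_isCycle_and_length_eq]
  exact ⟨cycleGraph.isCycle_cycle, by simp [cycleGraph.length_cycle]⟩

section

variable {k s : ℕ} {u v x y : Fin (2 * k + 1)}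

theorem addEdge_adj_self {V : Type*} {G : SimpleGraph V} {a b : V} (h : a ≠ b) :
    (addEdge G a b).Adj a b :=
  Or.inr ⟨rfl, h⟩

theorem addEdge_HkS_adj_new (hx : (x : ℕ) = u) (hy : (y : ℕ) = v) (h : (u : ℕ) ≠ v) :
    (addEdge (HkS k s) u v).Adj x y := by
  obtain rfl := Fin.ext hx
  obtain rfl := Fin.ext hy
  exact addEdge_adj_self fun h' => h (congrArg _ h')

theorem addEdge_HkS_adj_succ (h : (y : ℕ) = x + 1) : (addEdge (HkS k s) u v).Adj x y :=
  Or.inl ⟨fun h' => by simp [h'] at h, .inl (.inl h)⟩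

theorem addEdge_HkS_adj_A (h : (x : ℕ) ≠ y) (hx : (x : ℕ) < s) (hy : (y : ℕ) < s) :
    (addEdge (HkS k s) u v).Adj x y :=
  Or.inl ⟨fun h' => h (congrArg _ h'), .inl (.inr (.inl ⟨hx, hy⟩))⟩

theorem addEdge_HkS_adj_B (h : (x : ℕ) ≠ y) (hx : 2 * k - s + 1 ≤ (x : ℕ))
    (hy : 2 * k - s + 1 ≤ (y : ℕ)) : (addEdge (HkS k s) u v).Adj x y :=
  Or.inl ⟨fun h' => h (congrArg _ h'), .inl (.inr (.inr (.inl ⟨hx, hy⟩)))⟩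

theorem addEdge_HkS_adj_C (hx : (x : ℕ) < s ∨ 2 * k - s + 1 ≤ (x : ℕ)) (h1 : s ≤ (y : ℕ))
    (h2 : (y : ℕ) ≤ 2 * k - s) (h3 : ((y : ℕ) - s) % 2 = 0) :
    (addEdge (HkS k s) u v).Adj x y :=
  Or.inl ⟨fun h' => by subst h'; omega, .inl (.inr (.inr (.inr ⟨hx, h1, h2, h3⟩)))⟩

/-- With vertices indexed from `0`, the cycle
`x_s … x_{2k-s}, x_{v+1} … x_{2k}, x_{2k-s+1} … x_v, x_u … x_{s-1}, x_0 … x_{u-1}`. -/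
theorem addEdge_HkS_hamiltonian_of_mem_A_B (hk : 4 ≤ k) (hs1 : 1 ≤ s) (hs2 : s ≤ k - 1)
    (hu : (u : ℕ) < s) (hv : 2 * k - s + 1 ≤ (v : ℕ)) :
    ∃ (w : Fin (2 * k + 1)) (c : (addEdge (HkS k s) u v).Walk w w), c.IsHamiltonianCycle := by
  have hvlt := v.isLt
  refine exists_isHamiltonianCycle_of_enumeration (by omega) _
    (fun i => if i + s ≤ 2 * k - s then i + s
      else if i + 2 * s + v ≤ 4 * k then i + 2 * s + v - 2 * k
      else if i + s ≤ 2 * k then i + s + v - 2 * k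
      else if i + u ≤ 2 * k then i + s + u - (2 * k + 1)
      else i + u - (2 * k + 1)) ?_ ?_ ?_ ?_
  · intro i hi
    split_ifs <;> omega
  · intro i j hij hj
    split_ifs <;> omega
  · intro i hi x y hx hy
    split_ifs at hx hy <;> first
      | omega
      | exact addEdge_HkS_adj_succ (by omega)
      | exact (addEdge_HkS_adj_new (by omega) (by omega) (by omega)).symm
      | exact addEdge_HkS_adj_A (by omega) (by omega) (by omega)
      | exact addEdge_HkS_adj_B (by omega) (by omega) (by omega)
      | exact (addEdge_HkS_adj_C (by omega) (by omega) (by omega) (by omega)).symm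
  · intro x y hx hy
    split_ifs at hx hy <;> first
      | omega
      | exact addEdge_HkS_adj_C (by omega) (by omega) (by omega) (by omega)

/-- With vertices indexed from `0`, the cycle
`x_v … x_{2k}, x_s … x_{v-1}, x_{u+1} … x_{s-1}, x_0 … x_u`. -/
theorem addEdge_HkS_hamiltonian_of_mem_A_D (hk : 4 ≤ k)
    (hu : (u : ℕ) < s) (hv : inD_HkS k s v) :
    ∃ (w : Fin (2 * k + 1)) (c : (addEdge (HkS k s) u v).Walk w w), c.IsHamiltonianCycle := by
  obtain ⟨hv1, hv2, hv3⟩ := hv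
  refine exists_isHamiltonianCycle_of_enumeration (by omega) _
    (fun i => if i + v ≤ 2 * k then i + v
      else if i + s ≤ 2 * k then i + s + v - (2 * k + 1)
      else if i + u ≤ 2 * k - 1 then i + s + u - 2 * k
      else i + u - 2 * k) ?_ ?_ ?_ ?_
  · intro i hi
    split_ifs <;> omega
  · intro i j hij hj
    split_ifs <;> omega
  · intro i hi x y hx hy
    split_ifs at hx hy <;> first
      | omega
      | exact addEdge_HkS_adj_succ (by omega)
      | exact addEdge_HkS_adj_A (by omega) (by omega) (by omega)
      | exact (addEdge_HkS_adj_C (by omega) (by omega) (by omega) (by omega)).symm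
      | exact addEdge_HkS_adj_C (by omega) (by omega) (by omega) (by omega)
  · intro x y hx hy
    split_ifs at hx hy <;> first
      | omega
      | exact addEdge_HkS_adj_new (by omega) (by omega) (by omega)

/-- With vertices indexed from `0`, the cycle
`x_0 … x_u, x_v … x_{2k}, x_{2k-s+1} … x_{v-1}, x_{u+1} … x_{2k-s}`. -/
theorem addEdge_HkS_hamiltonian_of_mem_D_B (hk : 4 ≤ k) (hs1 : 1 ≤ s)
    (hu : inD_HkS k s u) (hv : 2 * k - s + 1 ≤ (v : ℕ)) :
    ∃ (w : Fin (2 * k + 1)) (c : (addEdge (HkS k s) u v).Walk w w), c.IsHamiltonianCycle := by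
  obtain ⟨hu1, hu2, hu3⟩ := hu
  have hvlt := v.isLt
  refine exists_isHamiltonianCycle_of_enumeration (by omega) _
    (fun i => if i ≤ u then i
      else if i + v ≤ 2 * k + u + 1 then i + v - (u + 1)
      else if i ≤ u + s then i + v - (u + 1 + s)
      else i - s) ?_ ?_ ?_ ?_
  · intro i hi
    split_ifs <;> omega
  · intro i j hij hj
    split_ifs <;> omega
  · intro i hi x y hx hy
    split_ifs at hx hy <;> first
      | omega
      | exact addEdge_HkS_adj_succ (by omega)
      | exact addEdge_HkS_adj_new (by omega) (by omega) (by omega)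
      | exact addEdge_HkS_adj_B (by omega) (by omega) (by omega)
      | exact addEdge_HkS_adj_C (by omega) (by omega) (by omega) (by omega)
  · intro x y hx hy
    split_ifs at hx hy <;> first
      | omega
      | exact (addEdge_HkS_adj_C (by omega) (by omega) (by omega) (by omega)).symm

/-- With vertices indexed from `0`, the cycle
`x_0 … x_u, x_v … x_{2k}, x_{u+1} … x_{v-1}`. -/
theorem addEdge_HkS_hamiltonian_of_mem_D_D (hk : 4 ≤ k) (hs1 : 1 ≤ s)
    (huv : u < v) (hu : inD_HkS k s u) (hv : inD_HkS k s v) :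
    ∃ (w : Fin (2 * k + 1)) (c : (addEdge (HkS k s) u v).Walk w w), c.IsHamiltonianCycle := by
  obtain ⟨hu1, hu2, hu3⟩ := hu
  obtain ⟨hv1, hv2, hv3⟩ := hv
  have huv' : (u : ℕ) < v := huv
  refine exists_isHamiltonianCycle_of_enumeration (by omega) _
    (fun i => if i ≤ u then i
      else if i + v ≤ 2 * k + u + 1 then i + v - (u + 1)
      else i + v - (2 * k + 1)) ?_ ?_ ?_ ?_
  · intro i hi
    split_ifs <;> omega
  · intro i j hij hj
    split_ifs <;> omega
  · intro i hi x y hx hy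
    split_ifs at hx hy <;> first
      | omega
      | exact addEdge_HkS_adj_succ (by omega)
      | exact addEdge_HkS_adj_new (by omega) (by omega) (by omega)
      | exact addEdge_HkS_adj_C (by omega) (by omega) (by omega) (by omega)
  · intro x y hx hy
    split_ifs at hx hy <;> first
      | omega
      | exact (addEdge_HkS_adj_C (by omega) (by omega) (by omega) (by omega)).symm

theorem addEdge_HkS_hamiltonian_of_lt (hk : 4 ≤ k) (hs1 : 1 ≤ s) (hs2 : s ≤ k - 1)
    (huv : u < v) (hadj : ¬ (HkS k s).Adj u v)
    (hu : ¬ inC_HkS k s u) (hv : ¬ inC_HkS k s v) :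
    ∃ (w : Fin (2 * k + 1)) (c : (addEdge (HkS k s) u v).Walk w w), c.IsHamiltonianCycle := by
  have huv' : (u : ℕ) < v := huv
  have hA : ¬ ((u : ℕ) < s ∧ (v : ℕ) < s) := fun h =>
    hadj ⟨huv.ne, .inl (.inr (.inl h))⟩
  have hB : ¬ (2 * k - s + 1 ≤ (u : ℕ) ∧ 2 * k - s + 1 ≤ (v : ℕ)) := fun h =>
    hadj ⟨huv.ne, .inl (.inr (.inr (.inl h)))⟩
  have mem_D : ∀ i, ¬ inC_HkS k s i → s ≤ i → i ≤ 2 * k - s → inD_HkS k s i := by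
    intro i hi h1 h2
    unfold inC_HkS at hi
    exact ⟨h1, h2, by omega⟩
  rcases lt_or_ge (u : ℕ) s with hus | hus <;>
    rcases lt_or_ge (2 * k - s) (v : ℕ) with hvs | hvs
  · exact addEdge_HkS_hamiltonian_of_mem_A_B hk hs1 hs2 hus hvs
  · exact addEdge_HkS_hamiltonian_of_mem_A_D hk hus (mem_D v hv (by omega) hvs)
  · exact addEdge_HkS_hamiltonian_of_mem_D_B hk hs1 (mem_D u hu hus (by omega)) hvs
  · exact addEdge_HkS_hamiltonian_of_mem_D_D hk hs1 huv (mem_D u hu hus (by omega))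
      (mem_D v hv (by omega) hvs)

theorem addEdge_comm {V : Type*} (G : SimpleGraph V) (a b : V) :
    addEdge G a b = addEdge G b a := by
  rw [addEdge, addEdge, Sym2.eq_swap]

theorem addEdge_HkS_hamiltonian (hk : 4 ≤ k) (hs1 : 1 ≤ s) (hs2 : s ≤ k - 1)
    (huv : u ≠ v) (hadj : ¬ (HkS k s).Adj u v)
    (hu : ¬ inC_HkS k s u) (hv : ¬ inC_HkS k s v) :
    ∃ (w : Fin (2 * k + 1)) (c : (addEdge (HkS k s) u v).Walk w w), c.IsHamiltonianCycle := by
  rcases huv.lt_or_gt with h | h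
  · exact addEdge_HkS_hamiltonian_of_lt hk hs1 hs2 h hadj hu hv
  · rw [addEdge_comm]
    exact addEdge_HkS_hamiltonian_of_lt hk hs1 hs2 h (fun h' => hadj h'.symm) hv hu

end

theorem inC_HkS_two_iff {k i : ℕ} : inC_HkS k 2 i ↔ inC_HkM2 k i := by
  unfold inC_HkS inC_HkM2
  omega

/-- `H_k(2)` is a spanning subgraph of `H_k(M_2)`. -/
theorem HkS_two_le_HkM2 {k : ℕ} (hk : 4 ≤ k) : HkS k 2 ≤ HkM2 k := by
  intro x y h
  have hx := x.isLt
  have hy := y.isLt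
  simp only [HkS, HkM2, fromRel_adj, inC_HkS, inC_HkM2, ne_eq, Fin.ext_iff] at h ⊢
  omega

/-- Let `k ≥ 4` and `1 ≤ s ≤ k-1`. Adding any new edge joining two
distinct nonadjacent vertices of `A ∪ B ∪ D` (the complement of `C`) of `H_k(s)` yields
a Hamiltonian graph; the same holds for `H_k(M_2)`. -/
theorem HkS_HkM2_add_edge_hamiltonian (k s : ℕ) (hk : 4 ≤ k) (hs1 : 1 ≤ s)
    (hs2 : s ≤ k - 1) :
    (∀ u v : Fin (2 * k + 1), u ≠ v → ¬ (HkS k s).Adj u v →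
      ¬ inC_HkS k s (u : ℕ) → ¬ inC_HkS k s (v : ℕ) →
      ∃ (w : Fin (2 * k + 1)) (c : (addEdge (HkS k s) u v).Walk w w),
        c.IsHamiltonianCycle) ∧
    (∀ u v : Fin (2 * k + 1), u ≠ v → ¬ (HkM2 k).Adj u v →
      ¬ inC_HkM2 k (u : ℕ) → ¬ inC_HkM2 k (v : ℕ) →
      ∃ (w : Fin (2 * k + 1)) (c : (addEdge (HkM2 k) u v).Walk w w),
        c.IsHamiltonianCycle) := by
  refine ⟨fun u v huv hadj hu hv => addEdge_HkS_hamiltonian hk hs1 hs2 huv hadj hu hv,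
    fun u v huv hadj hu hv => ?_⟩
  have hle := HkS_two_le_HkM2 hk
  obtain ⟨w, c, hc⟩ := addEdge_HkS_hamiltonian (s := 2) hk (by omega) (by omega) huv
    (fun h => hadj (hle h)) (mt inC_HkS_two_iff.mp hu) (mt inC_HkS_two_iff.mp hv)
  exact ⟨w, c.map (.ofLE (sup_le_sup_right hle _)), hc.map Function.bijective_id⟩
end

section
/- Let k ≥ 4 and 1 ≤ s ≤ k−2. For every x ∈ C and every y ∈ D, there is a path on 2k vertices in H_k(s) starting at x and ending at y. The same holds for H_k(M_2): for every x ∈ C and every y ∈ D, there is a path on 2k vertices in H_k(M_2) starting at x and ending at y. -/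
open SimpleGraph

open SimpleGraph

/-- An injective sequence of `n + 1` consecutively adjacent vertices is a path. -/
theorem exists_isPath_of_injOn {V : Type*} {G : SimpleGraph V} (f : ℕ → V) (n : ℕ)
    (hadj : ∀ t < n, G.Adj (f t) (f (t + 1))) (hinj : Set.InjOn f (Set.Iic n)) :
    ∃ p : G.Walk (f 0) (f n), p.IsPath ∧ p.support.length = n + 1 := by
  suffices h : ∃ p : G.Walk (f 0) (f n), p.IsPath ∧ p.support.length = n + 1 ∧
      ∀ v ∈ p.support, ∃ t ≤ n, f t = v by
    obtain ⟨p, hp, hl, -⟩ := h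
    exact ⟨p, hp, hl⟩
  induction n with
  | zero => exact ⟨.nil, by simp⟩
  | succ n ih =>
    obtain ⟨p, hp, hl, hsupp⟩ := ih (fun t ht => hadj t (by omega))
      (hinj.mono (Set.Iic_subset_Iic.2 n.le_succ))
    refine ⟨p.concat (hadj n (by omega)), hp.concat ?_ _, ?_, ?_⟩
    · intro hmem
      obtain ⟨t, ht, hft⟩ := hsupp _ hmem
      have := hinj (Set.mem_Iic.2 (by omega)) (Set.mem_Iic.2 le_rfl) hft
      omega
    · simp [SimpleGraph.Walk.support_concat, hl]
    · intro v hv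
      rw [SimpleGraph.Walk.support_concat, List.mem_append, List.mem_singleton] at hv
      rcases hv with hv | rfl
      · obtain ⟨t, ht, hft⟩ := hsupp v hv
        exact ⟨t, by omega, hft⟩
      · exact ⟨n + 1, le_rfl, rfl⟩

/-- A sequence of `2k` naturals describing a path on `2k` vertices of `H_k(s)`. -/
theorem HkS_exists_path_of_seq {k s : ℕ} (hk : 1 ≤ k) {x y : Fin (2 * k + 1)} (f : ℕ → ℕ)
    (h0 : f 0 = x) (hend : f (2 * k - 1) = y) (hlt : ∀ t < 2 * k, f t < 2 * k + 1)
    (hinj : ∀ t < 2 * k, ∀ u < 2 * k, f t = f u → t = u)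
    (hadj : ∀ t < 2 * k - 1,
      (f (t + 1) = f t + 1 ∨ f t = f (t + 1) + 1) ∨
      ((f t < s ∨ 2 * k - s + 1 ≤ f t) ∧ inC_HkS k s (f (t + 1))) ∨
      ((f (t + 1) < s ∨ 2 * k - s + 1 ≤ f (t + 1)) ∧ inC_HkS k s (f t))) :
    ∃ p : (HkS k s).Walk x y, p.IsPath ∧ p.support.length = 2 * k := by
  have hval : ∀ t < 2 * k, ((Fin.ofNat (2 * k + 1) (f t) : Fin _) : ℕ) = f t := fun t ht =>
    Nat.mod_eq_of_lt (hlt t ht)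
  have hx : Fin.ofNat (2 * k + 1) (f 0) = x := Fin.ext (by rw [hval 0 (by omega), h0])
  have hy : Fin.ofNat (2 * k + 1) (f (2 * k - 1)) = y :=
    Fin.ext (by rw [hval _ (by omega), hend])
  obtain ⟨p, hp, hl⟩ := exists_isPath_of_injOn (G := HkS k s)
    (fun t => Fin.ofNat (2 * k + 1) (f t)) (2 * k - 1) (by
      intro t ht
      have h1 := hval t (by omega)
      have h2 := hval (t + 1) (by omega)
      have hne : f t ≠ f (t + 1) := fun h => by
        have := hinj t (by omega) (t + 1) (by omega) h
        omega
      rw [HkS, SimpleGraph.fromRel_adj, Ne, Fin.ext_iff, h1, h2]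
      have := hadj t ht
      tauto) (by
      intro t ht u hu h
      rw [Set.mem_Iic] at ht hu
      have h' := congrArg Fin.val h
      rw [hval t (by omega), hval u (by omega)] at h'
      exact hinj t (by omega) u (by omega) h')
  exact ⟨p.copy hx hy, by simpa using hp, by simpa using hl.trans (by omega)⟩

/-- Paths on `2k` vertices in `H_k(s)` from `x ∈ C` to `y ∈ D` when `x` precedes `y`. -/
theorem HkS_exists_path_of_lt {k s : ℕ} (hs1 : 1 ≤ s) (hs2 : s + 2 ≤ k)
    {x y : Fin (2 * k + 1)} (hx : inC_HkS k s x) (hy : inD_HkS k s y) (hxy : x < y) :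
    ∃ p : (HkS k s).Walk x y, p.IsPath ∧ p.support.length = 2 * k := by
  obtain ⟨X, hX⟩ := x
  obtain ⟨Y, hY⟩ := y
  rw [Fin.mk_lt_mk] at hxy
  simp only [inC_HkS, inD_HkS] at hx hy
  by_cases h1 : Y = X + 1
  · by_cases h2 : X = s
    · -- `x, 2k, …, s + 4, 0, …, s - 1, s + 2, s + 1`
      apply HkS_exists_path_of_seq (by omega) (fun t =>
        if t = 0 then X else if t + s + 3 ≤ 2 * k then 2 * k + 1 - t
        else if t + 3 ≤ 2 * k then t + s + 2 - 2 * k else 2 * k + s - t)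
      all_goals try simp only [inC_HkS]
      all_goals grind
    · -- `x, 0, …, x - 2, 2k, …, y`
      apply HkS_exists_path_of_seq (by omega) (fun t =>
        if t = 0 then X else if t < X then t - 1 else 2 * k + X - t)
      all_goals try simp only [inC_HkS]
      all_goals grind
  · -- `x, …, 0, x + 2, …, y - 1, 2k, …, y`
    apply HkS_exists_path_of_seq (by omega) (fun t =>
      if t ≤ X then X - t else if t + 2 ≤ Y then t + 1 else 2 * k + Y - 1 - t)
    all_goals try simp only [inC_HkS]
    all_goals grind

/-- Reversing the order of the vertices is an endomorphism of `H_k(s)`. -/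
def HkSRevHom {k s : ℕ} (hs : s ≤ 2 * k) : HkS k s →g HkS k s where
  toFun := Fin.rev
  map_rel' := by
    intro a b h
    simp only [HkS, SimpleGraph.fromRel_adj, inC_HkS, Ne, Fin.ext_iff, Fin.val_rev] at h ⊢
    have := a.isLt
    have := b.isLt
    obtain ⟨hne, (h | h | h | h) | (h | h | h | h)⟩ := h
    · exact ⟨by omega, .inr (.inl (by omega))⟩
    · exact ⟨by omega, .inl (.inr (.inr (.inl (by omega))))⟩
    · exact ⟨by omega, .inl (.inr (.inl (by omega)))⟩
    · exact ⟨by omega, .inl (.inr (.inr (.inr (by omega))))⟩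
    · exact ⟨by omega, .inl (.inl (by omega))⟩
    · exact ⟨by omega, .inr (.inr (.inr (.inl (by omega))))⟩
    · exact ⟨by omega, .inr (.inr (.inl (by omega)))⟩
    · exact ⟨by omega, .inr (.inr (.inr (.inr (by omega))))⟩

theorem HkS_exists_path {k s : ℕ} (hs1 : 1 ≤ s) (hs2 : s + 2 ≤ k)
    {x y : Fin (2 * k + 1)} (hx : inC_HkS k s x) (hy : inD_HkS k s y) :
    ∃ p : (HkS k s).Walk x y, p.IsPath ∧ p.support.length = 2 * k := by
  by_cases hxy : x < y
  · exact HkS_exists_path_of_lt hs1 hs2 hx hy hxy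
  · have hlt : x.rev < y.rev := by
      rw [Fin.rev_lt_rev]
      refine lt_of_le_of_ne (not_lt.1 hxy) fun h => ?_
      subst h
      simp only [inC_HkS, inD_HkS] at hx hy
      omega
    obtain ⟨p, hp, hl⟩ := HkS_exists_path_of_lt (x := x.rev) (y := y.rev) hs1 hs2
      (by simp only [inC_HkS, Fin.val_rev] at hx ⊢; omega)
      (by simp only [inD_HkS, Fin.val_rev] at hy ⊢; omega) hlt
    have hs : s ≤ 2 * k := by omega
    have hx' : HkSRevHom hs x.rev = x := Fin.rev_rev x
    have hy' : HkSRevHom hs y.rev = y := Fin.rev_rev y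
    refine ⟨(p.map (HkSRevHom hs)).copy hx' hy', ?_, ?_⟩
    · simpa using SimpleGraph.Walk.IsPath.map (f := HkSRevHom hs) Fin.rev_injective hp
    · simpa using hl

/-- Let `k ≥ 4` and `1 ≤ s ≤ k-2`. For every `x ∈ C` and `y ∈ D`
there is a path on `2k` vertices in `H_k(s)` from `x` to `y`; the same holds
for `H_k(M_2)`. -/
theorem HkS_HkM2_path_C_to_D (k s : ℕ) (hk : 4 ≤ k) (hs1 : 1 ≤ s) (hs2 : s ≤ k - 2) :
    (∀ x y : Fin (2 * k + 1), inC_HkS k s (x : ℕ) → inD_HkS k s (y : ℕ) →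
      ∃ p : (HkS k s).Walk x y, p.IsPath ∧ p.support.length = 2 * k) ∧
    (∀ x y : Fin (2 * k + 1), inC_HkM2 k (x : ℕ) → inD_HkM2 k (y : ℕ) →
      ∃ p : (HkM2 k).Walk x y, p.IsPath ∧ p.support.length = 2 * k) := by
  refine ⟨fun x y hx hy => HkS_exists_path hs1 (by omega) hx hy, fun x y hx hy => ?_⟩
  obtain ⟨p, hp, hl⟩ := HkS_exists_path (k := k) (s := 2) (x := x) (y := y) (by omega) (by omega)
    (by simp only [inC_HkS, inC_HkM2] at hx ⊢; omega)
    (by simp only [inD_HkS, inD_HkM2] at hy ⊢; omega)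
  exact ⟨p.mapLe (HkS_two_le_HkM2 hk), hp.mapLe _, by simpa using hl⟩
end

section
/- Let k1 ≥ k2 ≥ 2 and set k = k1 + k2 + 1. Then for every vertex v of H_k(P_3), the graph H_k(P_3) − v contains P_{2k1+1} ∪ P_{2k2+1} as a subgraph. -/
open SimpleGraph

open SimpleGraph

/-- Two vertex sequences of natural-number labels that avoid `v` and are consecutively adjacent
in `HkP3 k` yield a copy of two disjoint paths in `HkP3 k` with `v` deleted. -/
lemma containsCopy_HkP3_delete_of_sequences (k m n : ℕ) (v : Fin (2 * k + 1)) (f g : ℕ → ℕ)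
    (hf : ∀ i < m, f i ≤ 2 * k ∧ f i ≠ v) (hg : ∀ i < n, g i ≤ 2 * k ∧ g i ≠ v)
    (hff : ∀ i < m, ∀ j < m, f i = f j → i = j) (hgg : ∀ i < n, ∀ j < n, g i = g j → i = j)
    (hfg : ∀ i < m, ∀ j < n, f i ≠ g j)
    (hfa : ∀ i, i + 1 < m → (inB_HkP3 k (f i) ∧ ¬ inB_HkP3 k (f (i + 1))) ∨
      (¬ inB_HkP3 k (f i) ∧ inB_HkP3 k (f (i + 1))))
    (hga : ∀ i, i + 1 < n → (g i = 0 ∧ g (i + 1) = 1) ∨ (g i = 1 ∧ g (i + 1) = 2) ∨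
      (inB_HkP3 k (g i) ∧ ¬ inB_HkP3 k (g (i + 1))) ∨
      (¬ inB_HkP3 k (g i) ∧ inB_HkP3 k (g (i + 1)))) :
    ContainsCopy ((HkP3 k).induce {u | u ≠ v}) (pathGraph m ⊕g pathGraph n) := by
  refine ⟨Sum.elim
    (fun i => ⟨⟨f i, by have := hf i i.2; omega⟩, fun h => (hf i i.2).2 (congrArg Fin.val h)⟩)
    (fun i => ⟨⟨g i, by have := hg i i.2; omega⟩, fun h => (hg i i.2).2 (congrArg Fin.val h)⟩),
    ?_, ?_⟩
  · rintro (i | i) (j | j) h <;> simp only [Sum.elim_inl, Sum.elim_inr, Subtype.mk.injEq,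
      Fin.mk.injEq] at h
    · exact congrArg Sum.inl (Fin.ext (hff i i.2 j j.2 h))
    · exact absurd h (hfg i i.2 j j.2)
    · exact absurd h.symm (hfg j j.2 i i.2)
    · exact congrArg Sum.inr (Fin.ext (hgg i i.2 j j.2 h))
  · rintro (⟨i, hi⟩ | ⟨i, hi⟩) (⟨j, hj⟩ | ⟨j, hj⟩) h <;>
      simp only [sum_adj, pathGraph_adj] at h
    · simp only [Sum.elim_inl, comap_adj, Function.Embedding.subtype_apply, HkP3, fromRel_adj,
        ne_eq, Fin.mk.injEq]
      refine ⟨fun e => by have := hff i hi j hj e; omega, ?_⟩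
      rcases h with rfl | rfl
      · have := hfa i hj
        tauto
      · have := hfa j hi
        tauto
    · simp only [Sum.elim_inr, comap_adj, Function.Embedding.subtype_apply, HkP3, fromRel_adj,
        ne_eq, Fin.mk.injEq]
      refine ⟨fun e => by have := hgg i hi j hj e; omega, ?_⟩
      rcases h with rfl | rfl
      · have := hga i hj
        tauto
      · have := hga j hi
        tauto

/-- Deleting a vertex outside the part `B`: both paths alternate between the two parts. -/
lemma containsCopy_HkP3_delete_of_not_inB (k1 k2 : ℕ) (v : Fin (2 * (k1 + k2 + 1) + 1))
    (hv : ¬ inB_HkP3 (k1 + k2 + 1) v) :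
    ContainsCopy ((HkP3 (k1 + k2 + 1)).induce {u | u ≠ v})
      (pathGraph (2 * k1 + 1) ⊕g pathGraph (2 * k2 + 1)) := by
  obtain ⟨a, ha⟩ : ∃ a : ℕ → ℕ, ∀ j, (j < 3 ∧ a j = j) ∨ (3 ≤ j ∧ a j = j + k1 + k2) :=
    ⟨fun j => if j < 3 then j else j + k1 + k2, fun j => by grind⟩
  obtain ⟨o, ho⟩ : ∃ o : ℕ → ℕ, ∀ j, (a j < v ∧ o j = a j) ∨ (v ≤ a j ∧ o j = a (j + 1)) :=
    ⟨fun j => if a j < v then a j else a (j + 1), fun j => by grind⟩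
  have hv' := v.2
  have o_inj : ∀ i j, o i = o j → i = j := by
    intro i j h
    have := ha i; have := ha j; have := ha (i + 1); have := ha (j + 1)
    have := ho i; have := ho j
    omega
  have o_mem : ∀ j < k1 + k2 + 2, o j ≤ 2 * (k1 + k2 + 1) ∧ o j ≠ v ∧
      ¬ inB_HkP3 (k1 + k2 + 1) (o j) := by
    intro j hj
    have := ha j; have := ha (j + 1); have := ho j
    unfold inB_HkP3 at *
    omega
  obtain ⟨f, hf⟩ : ∃ f : ℕ → ℕ, ∀ i, (i % 2 = 0 ∧ f i = o (i / 2)) ∨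
      (i % 2 = 1 ∧ f i = 3 + i / 2) :=
    ⟨fun i => if i % 2 = 0 then o (i / 2) else 3 + i / 2, fun i => by grind⟩
  obtain ⟨g, hg⟩ : ∃ g : ℕ → ℕ, ∀ i, (i % 2 = 0 ∧ g i = o (k1 + 1 + i / 2)) ∨
      (i % 2 = 1 ∧ g i = 3 + k1 + i / 2) :=
    ⟨fun i => if i % 2 = 0 then o (k1 + 1 + i / 2) else 3 + k1 + i / 2, fun i => by grind⟩
  unfold inB_HkP3 at *
  apply containsCopy_HkP3_delete_of_sequences _ _ _ v f g <;> try unfold inB_HkP3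
  · intro i hi
    have := hf i; have := o_mem (i / 2) (by omega)
    omega
  · intro i hi
    have := hg i; have := o_mem (k1 + 1 + i / 2) (by omega)
    omega
  · intro i hi j hj h
    have := hf i; have := o_mem (i / 2) (by omega)
    have := hf j; have := o_mem (j / 2) (by omega)
    have := o_inj (i / 2) (j / 2)
    omega
  · intro i hi j hj h
    have := hg i; have := o_mem (k1 + 1 + i / 2) (by omega)
    have := hg j; have := o_mem (k1 + 1 + j / 2) (by omega)
    have := o_inj (k1 + 1 + i / 2) (k1 + 1 + j / 2)
    omega
  · intro i hi j hj h
    have := hf i; have := o_mem (i / 2) (by omega)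
    have := hg j; have := o_mem (k1 + 1 + j / 2) (by omega)
    have := o_inj (i / 2) (k1 + 1 + j / 2)
    omega
  · intro i hi
    have := hf i; have := o_mem (i / 2) (by omega)
    have := hf (i + 1); have := o_mem ((i + 1) / 2) (by omega)
    omega
  · intro i hi
    have := hg i; have := o_mem (k1 + 1 + i / 2) (by omega)
    have := hg (i + 1); have := o_mem (k1 + 1 + (i + 1) / 2) (by omega)
    omega

/-- Deleting a vertex of the part `B`: the second path starts with `a_1 a_2 a_3`, and otherwise
both paths alternate between `B` and `C`. -/
lemma containsCopy_HkP3_delete_of_inB (k1 k2 : ℕ) (hk2 : 1 ≤ k2)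
    (v : Fin (2 * (k1 + k2 + 1) + 1)) (hv : inB_HkP3 (k1 + k2 + 1) v) :
    ContainsCopy ((HkP3 (k1 + k2 + 1)).induce {u | u ≠ v})
      (pathGraph (2 * k1 + 1) ⊕g pathGraph (2 * k2 + 1)) := by
  obtain ⟨b, hb⟩ : ∃ b : ℕ → ℕ, ∀ j : ℕ, (3 + j < v ∧ b j = 3 + j) ∨ (v ≤ 3 + j ∧ b j = 4 + j) :=
    ⟨fun j => if 3 + j < v then 3 + j else 4 + j, fun j => by grind⟩
  obtain ⟨f, hf⟩ : ∃ f : ℕ → ℕ, ∀ i, (i % 2 = 0 ∧ f i = k1 + k2 + 3 + i / 2) ∨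
      (i % 2 = 1 ∧ f i = b (i / 2)) :=
    ⟨fun i => if i % 2 = 0 then k1 + k2 + 3 + i / 2 else b (i / 2), fun i => by grind⟩
  obtain ⟨g, hg⟩ : ∃ g : ℕ → ℕ, ∀ i, (i < 3 ∧ g i = i) ∨
      (3 ≤ i ∧ i % 2 = 0 ∧ g i = 2 * k1 + k2 + 4 + (i - 4) / 2) ∨
      (3 ≤ i ∧ i % 2 = 1 ∧ g i = b (k1 + (i - 3) / 2)) :=
    ⟨fun i => if i < 3 then i else if i % 2 = 0 then 2 * k1 + k2 + 4 + (i - 4) / 2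
      else b (k1 + (i - 3) / 2), fun i => by grind⟩
  unfold inB_HkP3 at *
  apply containsCopy_HkP3_delete_of_sequences _ _ _ v f g <;> try unfold inB_HkP3
  · intro i hi
    have := hf i; have := hb (i / 2)
    omega
  · intro i hi
    have := hg i; have := hb (k1 + (i - 3) / 2)
    omega
  · intro i hi j hj h
    have := hf i; have := hb (i / 2)
    have := hf j; have := hb (j / 2)
    omega
  · intro i hi j hj h
    have := hg i; have := hb (k1 + (i - 3) / 2)
    have := hg j; have := hb (k1 + (j - 3) / 2)
    omega
  · intro i hi j hj h
    have := hf i; have := hb (i / 2)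
    have := hg j; have := hb (k1 + (j - 3) / 2)
    omega
  · intro i hi
    have := hf i; have := hb (i / 2)
    have := hf (i + 1); have := hb ((i + 1) / 2)
    omega
  · intro i hi
    have := hg i; have := hb (k1 + (i - 3) / 2)
    have := hg (i + 1); have := hb (k1 + (i + 1 - 3) / 2)
    omega

/-- Let `k1 ≥ k2 ≥ 2` and `k = k1 + k2 + 1`. Deleting any vertex of
`H_k(P_3)` leaves a graph containing `P_{2k1+1} ∪ P_{2k2+1}` as a subgraph. -/
theorem HkP3_delete_vertex (k1 k2 : ℕ) (hk2 : 2 ≤ k2) (hk12 : k2 ≤ k1) :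
    ∀ v : Fin (2 * (k1 + k2 + 1) + 1),
      ContainsCopy ((HkP3 (k1 + k2 + 1)).induce {u | u ≠ v})
        ((pathGraph (2 * k1 + 1)) ⊕g (pathGraph (2 * k2 + 1))) := by
  intro v
  by_cases hv : inB_HkP3 (k1 + k2 + 1) v
  · exact containsCopy_HkP3_delete_of_inB k1 k2 (by omega) v hv
  · exact containsCopy_HkP3_delete_of_not_inB k1 k2 v hv
end

section
/- Let k ≥ 5. Every edge of H_k(P_3), except the edges joining a_2 to vertices of B, is contained in a cycle of length 2k in H_k(P_3). Moreover, there is a path on 2k vertices in H_k(P_3) starting at a_1 and ending at a_3. -/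
open SimpleGraph

open SimpleGraph

/-- In a complete bipartite piece with parts `P` and `Q`, `|P| = |Q| + 1 ≥ 2`, two distinct vertices
`x`, `y` of `P` are joined by a path through all of `P ∪ Q` whose first edge is any prescribed
edge from `x` to `Q`. -/
lemma exists_alternating_path {V : Type*} [DecidableEq V] {G : SimpleGraph V} (n : ℕ)
    (P Q : Finset V) (x y q : V) (hP : P.card = n + 2) (hQ : Q.card = n + 1)
    (hPQ : Disjoint P Q) (hadj : ∀ p ∈ P, ∀ c ∈ Q, G.Adj p c)
    (hx : x ∈ P) (hy : y ∈ P) (hxy : x ≠ y) (hq : q ∈ Q) :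
    ∃ p : G.Walk x y, p.IsPath ∧ p.length = 2 * n + 2 ∧
      (∀ v ∈ p.support, v ∈ P ∨ v ∈ Q) ∧ s(x, q) ∈ p.edges := by
  have hxq := hadj x hx q hq
  induction n generalizing P Q x q with
  | zero =>
    have hqy := (hadj y hy q hq).symm
    refine ⟨.cons hxq (.cons hqy .nil), ?_, rfl, ?_, by simp⟩
    · simp [Walk.cons_isPath_iff, hxq.ne, hqy.ne, hxy]
    · simp [hx, hy, hq]
  | succ n ih =>
    obtain ⟨x', hx'⟩ : ((P.erase x).erase y).Nonempty := by
      rw [← Finset.card_pos, Finset.card_erase_of_mem (by simp [hy, hxy.symm]),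
        Finset.card_erase_of_mem hx]
      omega
    obtain ⟨q', hq'⟩ : (Q.erase q).Nonempty := by
      rw [← Finset.card_pos, Finset.card_erase_of_mem hq]
      omega
    simp only [Finset.mem_erase] at hx'
    obtain ⟨p, hp, hlen, hsupp, -⟩ := ih (P.erase x) (Q.erase q) x' q'
      (by rw [Finset.card_erase_of_mem hx]; omega)
      (by rw [Finset.card_erase_of_mem hq]; omega)
      (hPQ.mono (Finset.erase_subset _ _) (Finset.erase_subset _ _))
      (fun a ha c hc => hadj a (Finset.mem_of_mem_erase ha) c (Finset.mem_of_mem_erase hc))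
      (by simp [hx']) (by simp [hy, hxy.symm]) hx'.1 hq'
      (hadj x' hx'.2.2 q' (Finset.mem_of_mem_erase hq'))
    have hqx' := (hadj x' hx'.2.2 q hq).symm
    have hxQ : x ∉ Q := Finset.disjoint_left.1 hPQ hx
    have hqP : q ∉ P := Finset.disjoint_right.1 hPQ hq
    have hqp : q ∉ p.support := fun h => by simpa [hqP] using hsupp q h
    have hxp : x ∉ p.support := fun h => by simpa [hxQ] using hsupp x h
    refine ⟨.cons hxq (.cons hqx' p), ?_, ?_, ?_, by simp⟩
    · simp [Walk.cons_isPath_iff, hp, hqp, hxp, hxq.ne]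
    · simp [hlen]; ring
    · intro v hv
      simp only [Walk.support_cons, List.mem_cons] at hv
      rcases hv with rfl | rfl | hv
      · exact .inl hx
      · exact .inr hq
      · exact (hsupp v hv).imp Finset.mem_of_mem_erase Finset.mem_of_mem_erase

lemma HkP3_adj_of_inB {k : ℕ} {x y : Fin (2 * k + 1)} (hx : inB_HkP3 k x) (hy : ¬ inB_HkP3 k y) :
    (HkP3 k).Adj x y :=
  ⟨by rintro rfl; exact hy hx, .inl (.inr (.inr ⟨hx, hy⟩))⟩

/-- The part `B` of `H_k(P_3)` as a finset. -/
lemma exists_finset_inB (k : ℕ) : ∃ B : Finset (Fin (2 * k + 1)),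
    B.card = k - 1 ∧ ∀ v, v ∈ B ↔ inB_HkP3 k v := by
  rcases Nat.lt_or_ge k 2 with h | h
  · exact ⟨∅, by simp; omega, fun v => by simp [inB_HkP3]; omega⟩
  refine ⟨Finset.Icc ⟨3, by omega⟩ ⟨k + 1, by omega⟩, by simp, fun v => ?_⟩
  simp [inB_HkP3, Fin.le_def]

/-- The set `C` of `H_k(P_3)` contains a finset of size `k - 2` through any prescribed vertex. -/
lemma exists_finset_inC {k : ℕ} (hk : 3 ≤ k) {c : Fin (2 * k + 1)} (hc : inC_HkP3 k c) :
    ∃ C : Finset (Fin (2 * k + 1)), C.card = k - 2 ∧ c ∈ C ∧ ∀ v ∈ C, inC_HkP3 k v := by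
  obtain ⟨C, hcC, hC, hcard⟩ := Finset.exists_subsuperset_card_eq (n := k - 2)
    (s := {c}) (t := Finset.Icc ⟨k + 2, by omega⟩ ⟨2 * k, by omega⟩)
    (by simpa [Fin.le_def, inC_HkP3] using hc) (by simp; omega) (by simp; omega)
  exact ⟨C, hcard, by simpa using hcC,
    fun v hv => by simpa [Fin.le_def, inC_HkP3] using hC hv⟩

/-- The cycles `a_1 a_2 a_3 x c … y a_1` of length `2k` in `H_k(P_3)`. -/
lemma HkP3_exists_cycle {k : ℕ} (hk : 3 ≤ k) {a₁ a₂ a₃ x y c : Fin (2 * k + 1)}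
    (h₁ : (a₁ : ℕ) = 0) (h₂ : (a₂ : ℕ) = 1) (h₃ : (a₃ : ℕ) = 2)
    (hx : inB_HkP3 k x) (hy : inB_HkP3 k y) (hxy : x ≠ y) (hc : inC_HkP3 k c) :
    ∃ (w : Fin (2 * k + 1)) (p : (HkP3 k).Walk w w), p.IsCycle ∧ p.length = 2 * k ∧
      s(a₁, a₂) ∈ p.edges ∧ s(a₂, a₃) ∈ p.edges ∧ s(a₃, x) ∈ p.edges ∧ s(x, c) ∈ p.edges ∧
      s(y, a₁) ∈ p.edges := by
  obtain ⟨B, hBcard, hB⟩ := exists_finset_inB k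
  obtain ⟨C, hCcard, hcC, hC⟩ := exists_finset_inC hk hc
  have hCB : ∀ v, inC_HkP3 k v → ¬ inB_HkP3 k v := fun v hv hv' => by
    simp only [inC_HkP3, inB_HkP3] at hv hv'; omega
  obtain ⟨p, hp, hlen, hsupp, hxc⟩ := exists_alternating_path (G := HkP3 k) (k - 3) B C x y c
    (by omega) (by omega)
    (Finset.disjoint_left.2 fun v hv hv' => hCB v (hC v hv') ((hB v).1 hv))
    (fun b hb c hc => HkP3_adj_of_inB ((hB b).1 hb) (hCB c (hC c hc)))
    ((hB x).2 hx) ((hB y).2 hy) hxy hcC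
  have hge : ∀ v ∈ p.support, 3 ≤ (v : ℕ) := fun v hv => by
    rcases hsupp v hv with h | h
    · exact ((hB v).1 h).1
    · have := (hC v h).1; omega
  have h12 : (HkP3 k).Adj a₁ a₂ := ⟨by rintro rfl; omega, .inl (.inl ⟨h₁, h₂⟩)⟩
  have h23 : (HkP3 k).Adj a₂ a₃ := ⟨by rintro rfl; omega, .inl (.inr (.inl ⟨h₂, h₃⟩))⟩
  have h3x : (HkP3 k).Adj a₃ x :=
    (HkP3_adj_of_inB hx (by simp [inB_HkP3, h₃])).symm
  have hy1 : (HkP3 k).Adj y a₁ := HkP3_adj_of_inB hy (by simp [inB_HkP3, h₁])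
  have h13 : a₁ ≠ a₃ := by rintro rfl; omega
  have n1 : a₁ ∉ p.support := fun h => by have := hge _ h; omega
  have n2 : a₂ ∉ p.support := fun h => by have := hge _ h; omega
  have n3 : a₃ ∉ p.support := fun h => by have := hge _ h; omega
  have hy2 : y ≠ a₂ := by rintro rfl; exact n2 p.end_mem_support
  have h1x : a₁ ≠ x := by rintro rfl; exact n1 p.start_mem_support
  refine ⟨y, .cons hy1 (.cons h12 (.cons h23 (.cons h3x p))), ?_, ?_, ?_⟩
  · rw [Walk.cons_isCycle_iff]
    refine ⟨by simp [Walk.cons_isPath_iff, hp, n1, n2, n3, h12.ne, h23.ne, h13], ?_⟩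
    have hyp : s(y, a₁) ∉ p.edges := fun h => n1 (p.snd_mem_support_of_mem_edges h)
    simp [hyp, hy2, hy1.ne, h12.ne, h13, h1x]
  · simp [hlen]; omega
  · simp [hxc]

/-- The path `a_1 a_2 b … b' a_3` on `2k` vertices in `H_k(P_3)`. -/
lemma HkP3_exists_path {k : ℕ} (hk : 3 ≤ k) {a₁ a₂ a₃ : Fin (2 * k + 1)}
    (h₁ : (a₁ : ℕ) = 0) (h₂ : (a₂ : ℕ) = 1) (h₃ : (a₃ : ℕ) = 2) :
    ∃ p : (HkP3 k).Walk a₁ a₃, p.IsPath ∧ p.support.length = 2 * k := by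
  obtain ⟨B, hBcard, hB⟩ := exists_finset_inB k
  obtain ⟨C, hCcard, -, hC⟩ := exists_finset_inC (c := ⟨2 * k, by omega⟩) hk
    (by simp only [inC_HkP3]; omega)
  have h23 : a₂ ≠ a₃ := by rintro rfl; omega
  have hPB : ∀ v ∈ insert a₂ (insert a₃ C), ¬ inB_HkP3 k v ∧ v ≠ a₁ := fun v hv => by
    simp only [Finset.mem_insert] at hv
    rw [Ne, Fin.ext_iff]
    simp only [inB_HkP3]
    rcases hv with rfl | rfl | hv
    · omega
    · omega
    · have := (hC v hv).1; omega
  have n2 : a₂ ∉ insert a₃ C := by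
    simp only [Finset.mem_insert, h23, false_or]
    exact fun h => by have := (hC _ h).1; omega
  have n3 : a₃ ∉ C := fun h => by have := (hC _ h).1; omega
  obtain ⟨p, hp, hlen, hsupp, -⟩ := exists_alternating_path (G := HkP3 k) (k - 2)
    (insert a₂ (insert a₃ C)) B a₂ a₃ ⟨3, by omega⟩
    (by rw [Finset.card_insert_of_notMem n2, Finset.card_insert_of_notMem n3]; omega) (by omega)
    (Finset.disjoint_left.2 fun v hv hv' => (hPB v hv).1 ((hB v).1 hv'))
    (fun a ha b hb => (HkP3_adj_of_inB ((hB b).1 hb) (hPB a ha).1).symm)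
    (by simp) (by simp) h23 ((hB _).2 (by simp only [inB_HkP3]; omega))
  have n1 : a₁ ∉ p.support := fun h => by
    rcases hsupp _ h with h | h
    · exact (hPB _ h).2 rfl
    · have := ((hB _).1 h).1; omega
  have h12 : (HkP3 k).Adj a₁ a₂ := ⟨by rintro rfl; omega, .inl (.inl ⟨h₁, h₂⟩)⟩
  exact ⟨.cons h12 p, by simp [Walk.cons_isPath_iff, hp, n1], by simp [hlen]; omega⟩

/-- Let `k ≥ 5`. Every edge of `H_k(P_3)` other than the edges
joining `a_2` (vertex `1`) to `B` lies on a cycle of length `2k`; moreover there is a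
path on `2k` vertices from `a_1` (vertex `0`) to `a_3` (vertex `2`). -/
theorem HkP3_edges_on_long_cycle (k : ℕ) (hk : 5 ≤ k) :
    (∀ u v : Fin (2 * k + 1), (HkP3 k).Adj u v →
      ¬ ((u : ℕ) = 1 ∧ inB_HkP3 k (v : ℕ)) → ¬ ((v : ℕ) = 1 ∧ inB_HkP3 k (u : ℕ)) →
      ∃ (w : Fin (2 * k + 1)) (c : (HkP3 k).Walk w w),
        c.IsCycle ∧ c.length = 2 * k ∧ s(u, v) ∈ c.edges) ∧
    (∃ p : (HkP3 k).Walk (0 : Fin (2 * k + 1)) (2 : Fin (2 * k + 1)),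
      p.IsPath ∧ p.support.length = 2 * k) := by
  have hk3 : 3 ≤ k := by omega
  have h0 : ((0 : Fin (2 * k + 1)) : ℕ) = 0 := rfl
  have h1 : ((1 : Fin (2 * k + 1)) : ℕ) = 1 := Nat.mod_eq_of_lt (show 1 < 2 * k + 1 by omega)
  have h2 : ((2 : Fin (2 * k + 1)) : ℕ) = 2 := Nat.mod_eq_of_lt (show 2 < 2 * k + 1 by omega)
  refine ⟨?_, HkP3_exists_path hk3 h0 h1 h2⟩
  have hb : inB_HkP3 k (⟨3, by omega⟩ : Fin (2 * k + 1)) := by simp only [inB_HkP3]; omega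
  have hb' : inB_HkP3 k (⟨4, by omega⟩ : Fin (2 * k + 1)) := by simp only [inB_HkP3]; omega
  have hc : inC_HkP3 k (⟨2 * k, by omega⟩ : Fin (2 * k + 1)) := by simp only [inC_HkP3]; omega
  have hother : ∀ b : Fin (2 * k + 1), ∃ x : Fin (2 * k + 1), inB_HkP3 k x ∧ x ≠ b := fun b => by
    by_cases h : (b : ℕ) = 3
    · exact ⟨_, hb', fun h' => by rw [← h'] at h; simp at h⟩
    · exact ⟨_, hb, fun h' => h (by rw [← h'])⟩
  have key : ∀ u v : Fin (2 * k + 1), (((u : ℕ) = 0 ∧ (v : ℕ) = 1) ∨ ((u : ℕ) = 1 ∧ (v : ℕ) = 2) ∨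
      (inB_HkP3 k u ∧ ¬ inB_HkP3 k v)) → ¬ ((v : ℕ) = 1 ∧ inB_HkP3 k u) →
      ∃ (w : Fin (2 * k + 1)) (c : (HkP3 k).Walk w w),
        c.IsCycle ∧ c.length = 2 * k ∧ s(u, v) ∈ c.edges := by
    rintro u v (⟨hu, hv⟩ | ⟨hu, hv⟩ | ⟨hu, hv⟩) hne
    · obtain ⟨w, p, hp, hlen, h, -⟩ := HkP3_exists_cycle hk3 hu hv h2 hb hb' (by simp) hc
      exact ⟨w, p, hp, hlen, h⟩
    · obtain ⟨w, p, hp, hlen, -, h, -⟩ := HkP3_exists_cycle hk3 h0 hu hv hb hb' (by simp) hc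
      exact ⟨w, p, hp, hlen, h⟩
    · obtain ⟨x, hx, hxu⟩ := hother u
      have hv1 : (v : ℕ) ≠ 1 := fun h => hne ⟨h, hu⟩
      have hcases : (v : ℕ) = 0 ∨ (v : ℕ) = 2 ∨ inC_HkP3 k v := by
        simp only [inB_HkP3, inC_HkP3] at hv ⊢; omega
      rcases hcases with hv | hv | hv
      · obtain ⟨w, p, hp, hlen, -, -, -, -, h⟩ := HkP3_exists_cycle hk3 hv h1 h2 hx hu hxu hc
        exact ⟨w, p, hp, hlen, h⟩
      · obtain ⟨w, p, hp, hlen, -, -, h, -, -⟩ :=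
          HkP3_exists_cycle hk3 h0 h1 hv hu hx hxu.symm hc
        exact ⟨w, p, hp, hlen, Sym2.eq_swap ▸ h⟩
      · obtain ⟨w, p, hp, hlen, -, -, -, h, -⟩ :=
          HkP3_exists_cycle hk3 h0 h1 h2 hu hx hxu.symm hv
        exact ⟨w, p, hp, hlen, h⟩
  rintro u v ⟨-, h | h⟩ hne hne'
  · exact key u v h hne'
  · rw [Sym2.eq_swap]
    exact key v u h hne
end
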